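/- arXiv:2002.06552 — 9 statements merged into one kernel-verified Lean document; each statement's English description precedes it below -/
import Mathlib

section
/- Let M and N be positive integers with N dividing M, and let d be a natural number with 0 ≤ d < M/N. Let x : {0,…,N−1} → ℂ be arbitrary. Define X : {0,…,M−1} → ℂ by X[k] = ∑_{n=0}^{N−1} x[n]·exp(−2πi·p·n/N) whenever k = d + p·(M/N) for some p ∈ {0,…,N−1}, and X[k] = 0 for all other k. Then for every ℓ ∈ {0,…,M−1}, the M-point inverse DFT x′[ℓ] := (1/M)·∑_{k=0}^{M−1} X[k]·exp(2πi·k·ℓ/M) satisfies x′[ℓ] = (N/M)·exp(2πi·ℓ·d/M)·x[ℓ mod N]. -/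
open Finset Complex

/-!
Only the subcarriers `k = d + p * (M / N)` contribute to the inverse DFT. If `ω` is a primitive
`M`-th root of unity, then `ω ^ (k * ℓ) = ω ^ (ℓ * d) * ζ ^ (p * ℓ)` on them, where
`ζ = ω ^ (M / N)` is a primitive `N`-th root of unity. So the sum is the phase `ω ^ (ℓ * d)` times
the `N`-point inverse DFT of the `N`-point DFT of the block, which is `N`-periodic in `ℓ`.
-/

theorem sum_range_mul_eq_sum_of_eq_zero_off_progression {A : Type*} [AddCommMonoid A]
    {f : ℕ → A} {N K d : ℕ} (hd : d < K)
    (hf : ∀ k < N * K, (¬ ∃ p < N, k = d + p * K) → f k = 0) :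
    ∑ k ∈ range (N * K), f k = ∑ p ∈ range N, f (d + p * K) := by
  have h_inj : Function.Injective fun p ↦ d + p * K := fun a b hab ↦
    Nat.eq_of_mul_eq_mul_right (by lia) (Nat.add_left_cancel hab)
  have h_lt : ∀ p < N, d + p * K < N * K := fun p hp ↦
    calc d + p * K < (p + 1) * K := by lia
      _ ≤ N * K := Nat.mul_le_mul_right K hp
  refine (sum_of_injOn _ h_inj.injOn ?_ ?_ fun _ _ ↦ rfl).symm
  · intro p hp
    simpa using h_lt p (by simpa using hp)
  · intro k hk h_notMem
    refine hf k (mem_range.1 hk) ?_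
    rintro ⟨p, hp, rfl⟩
    exact h_notMem ⟨p, by simpa using hp, rfl⟩

theorem geom_sum_eq_ite_of_pow_eq_one {R : Type*} [Ring R] [IsDomain R] [DecidableEq R]
    {z : R} {N : ℕ} (hz : z ^ N = 1) :
    ∑ p ∈ range N, z ^ p = if z = 1 then (N : R) else 0 := by
  split_ifs with h
  · simp [h]
  · refine (mul_eq_zero.1 ?_).resolve_right (sub_ne_zero.2 h)
    rw [geom_sum_mul, hz, sub_self]

section PrimitiveRoot

variable {F : Type*} [Field F]

theorem sum_primitiveRoot_pow_div_pow {ζ : F} {N : ℕ} (hζ : IsPrimitiveRoot ζ N) (ℓ n : ℕ) :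
    ∑ p ∈ range N, (ζ ^ ℓ / ζ ^ n) ^ p = if ℓ ≡ n [MOD N] then (N : F) else 0 := by
  classical
  rcases eq_or_ne N 0 with rfl | hN
  · simp
  have h_one : (ζ ^ ℓ / ζ ^ n) ^ N = 1 := by
    rw [div_pow, pow_right_comm, hζ.pow_eq_one, pow_right_comm ζ n, hζ.pow_eq_one, one_pow,
      one_pow, div_one]
  have h_iff : ζ ^ ℓ / ζ ^ n = 1 ↔ ℓ ≡ n [MOD N] := by
    rw [div_eq_one_iff_eq (pow_ne_zero n (hζ.ne_zero hN)),
      (hζ.isOfFinOrder hN).pow_eq_pow_iff_modEq, ← hζ.eq_orderOf]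
  rw [geom_sum_eq_ite_of_pow_eq_one h_one, if_congr h_iff rfl rfl]

theorem inverse_dft_dft_eq_mod {ζ : F} {N : ℕ} (hζ : IsPrimitiveRoot ζ N) (x : ℕ → F) (ℓ : ℕ) :
    ∑ p ∈ range N, (∑ n ∈ range N, x n * (ζ ^ (p * n))⁻¹) * ζ ^ (p * ℓ) = N * x (ℓ % N) := by
  rcases N.eq_zero_or_pos with rfl | hN
  · simp
  calc
    _ = ∑ n ∈ range N, x n * ∑ p ∈ range N, (ζ ^ ℓ / ζ ^ n) ^ p := by
      simp_rw [sum_mul, mul_sum]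
      rw [sum_comm]
      refine sum_congr rfl fun n _ ↦ sum_congr rfl fun p _ ↦ ?_
      rw [div_pow, ← pow_mul, ← pow_mul, mul_comm ℓ, mul_comm n, div_eq_inv_mul, mul_assoc]
    _ = ∑ n ∈ range N, if ℓ % N = n then x n * N else 0 :=
      sum_congr rfl fun n hn ↦ by
        simp only [sum_primitiveRoot_pow_div_pow hζ, Nat.ModEq, Nat.mod_eq_of_lt (mem_range.1 hn),
          mul_ite, mul_zero]
    _ = N * x (ℓ % N) := by
      rw [sum_ite_eq, if_pos (mem_range.2 (Nat.mod_lt ℓ hN)), mul_comm]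

theorem ifdma_time_domain_general {M N : ℕ} (hdvd : N ∣ M) {d : ℕ} (hd : d < M / N)
    {ω : F} (hω : IsPrimitiveRoot ω M) (x X : ℕ → F)
    (hX_on : ∀ p < N, X (d + p * (M / N)) =
      ∑ n ∈ range N, x n * ((ω ^ (M / N)) ^ (p * n))⁻¹)
    (hX_off : ∀ k < M, (¬ ∃ p < N, k = d + p * (M / N)) → X k = 0) (ℓ : ℕ) :
    (1 / (M : F)) * ∑ k ∈ range M, X k * ω ^ (k * ℓ) =
      ((N : F) / M) * ω ^ (ℓ * d) * x (ℓ % N) := by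
  have hM : M = N * (M / N) := (Nat.mul_div_cancel' hdvd).symm
  have hM_pos : 0 < M := Nat.pos_of_ne_zero fun h ↦ by simp [h] at hd
  have hζ : IsPrimitiveRoot (ω ^ (M / N)) N := hω.pow hM_pos (hM.trans (mul_comm _ _))
  have h_sum : ∑ k ∈ range M, X k * ω ^ (k * ℓ) = ω ^ (ℓ * d) * (N * x (ℓ % N)) := calc
    _ = ∑ p ∈ range N, X (d + p * (M / N)) * ω ^ ((d + p * (M / N)) * ℓ) := by
      conv_lhs => rw [hM]
      refine sum_range_mul_eq_sum_of_eq_zero_off_progression hd fun k hk hk_off ↦ ?_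
      rw [hX_off k (hM ▸ hk) hk_off, zero_mul]
    _ = ω ^ (ℓ * d) * ∑ p ∈ range N,
          (∑ n ∈ range N, x n * ((ω ^ (M / N)) ^ (p * n))⁻¹) * (ω ^ (M / N)) ^ (p * ℓ) := by
      rw [mul_sum]
      refine sum_congr rfl fun p hp ↦ ?_
      rw [hX_on p (mem_range.1 hp)]
      ring
    _ = ω ^ (ℓ * d) * (N * x (ℓ % N)) := by rw [inverse_dft_dft_eq_mod hζ]
  rw [h_sum]
  ring

end PrimitiveRoot

theorem exp_two_pi_I_mul_mul_div (M a b : ℕ) :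
    exp (2 * (Real.pi : ℂ) * I * a * b / M) = exp (2 * Real.pi * I / M) ^ (a * b) := by
  rw [← exp_nat_mul]
  push_cast
  ring_nf

theorem exp_two_pi_I_div_pow_div {M N : ℕ} (hM : M ≠ 0) (hdvd : N ∣ M) :
    exp (2 * (Real.pi : ℂ) * I / M) ^ (M / N) = exp (2 * Real.pi * I / N) := by
  have hM' : (M : ℂ) ≠ 0 := Nat.cast_ne_zero.2 hM
  have hN' : (N : ℂ) ≠ 0 := Nat.cast_ne_zero.2 (ne_zero_of_dvd_ne_zero hM hdvd)
  rw [← exp_nat_mul, Nat.cast_div hdvd hN']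
  field_simp

/-- Time-domain characterization of an IFDMA stream (Eq. (2) of the paper):
the `M`-point inverse DFT of the DFT-precoded block mapped to the evenly-spaced
subcarriers `{d + p·(M/N)}` equals the original symbol block repeated and
modulated by a phase ramp. -/
theorem ifdma_time_domain
    (M N : ℕ) (hN : 0 < N) (hdvd : N ∣ M) (d : ℕ) (hd : d < M / N)
    (x : ℕ → ℂ) (X : ℕ → ℂ)
    (hX_on : ∀ p < N, X (d + p * (M / N)) =
      ∑ n ∈ Finset.range N, x n * Complex.exp (-(2 * (Real.pi : ℂ) * Complex.I * p * n / N)))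
    (hX_off : ∀ k < M, (¬ ∃ p < N, k = d + p * (M / N)) → X k = 0)
    (ℓ : ℕ) (hℓ : ℓ < M) :
    (1 / (M : ℂ)) *
        ∑ k ∈ Finset.range M, X k * Complex.exp (2 * (Real.pi : ℂ) * Complex.I * k * ℓ / M)
      = ((N : ℂ) / (M : ℂ)) * Complex.exp (2 * (Real.pi : ℂ) * Complex.I * ℓ * d / M) *
          x (ℓ % N) := by
  have hM : M ≠ 0 := Nat.ne_zero_of_lt hℓ
  simp_rw [exp_neg, exp_two_pi_I_mul_mul_div, ← exp_two_pi_I_div_pow_div hM hdvd] at hX_on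
  simpa only [exp_two_pi_I_mul_mul_div] using
    ifdma_time_domain_general hdvd hd (isPrimitiveRoot_exp M hM) x X hX_on hX_off ℓ
end

section
/- (Theorem 1: full loading is possible in IFDMA.) Let m be a natural number and let n_1, …, n_K ∈ {0,1,…,m} be such that ∑_{k=1}^K 2^{n_k} ≤ 2^m. Then there exist pairwise disjoint sets S_1, …, S_K ⊆ {0,1,…,2^m−1} such that for each k, S_k = {d_k + i·2^{m−n_k} : i = 0,1,…,2^{n_k}−1} for some offset d_k with 0 ≤ d_k < 2^{m−n_k}; that is, each request for 2^{n_k} subcarriers receives an evenly-spaced set of size 2^{n_k} with spacing 2^{m−n_k}, and the sets of different requests do not overlap. -/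
/-- The evenly-spaced set of size `2^n` in `{0,…,2^m−1}` with offset `d`:
`{d + i·2^{m−n} : i = 0,…,2^n−1}`. -/
def evenSpaced (m n d : ℕ) : Finset ℕ :=
  Finset.image (fun i => d + i * 2 ^ (m - n)) (Finset.range (2 ^ n))

/-!
Grant the requests in decreasing order of size. When a request of size `c` is reached, the sizes
granted so far add up to less than `N`, so some point `x` is free; grant the residue class of `x`
modulo `N / c`. The earlier sets are residue classes modulo divisors of `N / c`, so the new class
lies inside each of them or avoids it, and it avoids them all because `x` does.
-/

/-- `IsEvenlySpaced N c S` says that `S` is an evenly-spaced set of size `c` in `{0, …, N - 1}`,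
for arbitrary `N` in place of `2 ^ m` and `c` in place of `2 ^ n`. The spacing `N / c` is meant
for `c ∣ N`; for `c = 0` it is `0` and no `S` qualifies. -/
def IsEvenlySpaced (N c : ℕ) (S : Finset ℕ) : Prop :=
  ∃ d < N / c, S = (Finset.range c).image fun i => d + i * (N / c)

theorem image_add_mul_range_eq_filter {q c d : ℕ} (hd : d < q) :
    ((Finset.range c).image fun i => d + i * q) = {x ∈ Finset.range (q * c) | x % q = d} := by
  ext x
  simp only [Finset.mem_image, Finset.mem_filter, Finset.mem_range]
  constructor
  · rintro ⟨i, hi, rfl⟩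
    refine ⟨?_, by rw [Nat.add_mul_mod_self_right, Nat.mod_eq_of_lt hd]⟩
    calc
      d + i * q < q + i * q := by gcongr
      _ = q * (i + 1) := by ring
      _ ≤ q * c := Nat.mul_le_mul_left q hi
  · rintro ⟨hx, rfl⟩
    exact ⟨x / q, Nat.div_lt_of_lt_mul hx, Nat.mod_add_div' x q⟩

theorem isEvenlySpaced_iff_eq_filter {N c : ℕ} {S : Finset ℕ} (hc : c ∣ N) :
    IsEvenlySpaced N c S ↔ ∃ d < N / c, S = {x ∈ Finset.range N | x % (N / c) = d} := by
  refine exists_congr fun d => and_congr_right fun hd => ?_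
  rw [image_add_mul_range_eq_filter hd, Nat.div_mul_cancel hc]

theorem isEvenlySpaced_two_pow_iff {m n : ℕ} {S : Finset ℕ} (hn : n ≤ m) :
    IsEvenlySpaced (2 ^ m) (2 ^ n) S ↔ ∃ d < 2 ^ (m - n), S = evenSpaced m n d := by
  simp only [IsEvenlySpaced, evenSpaced, Nat.pow_div hn two_pos]

theorem exists_isEvenlySpaced_mem {N c x : ℕ} (hc : c ∣ N) (hx : x < N) :
    ∃ S, IsEvenlySpaced N c S ∧ x ∈ S := by
  have hspacing : 0 < N / c := Nat.div_pos_iff.2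
    ⟨Nat.pos_of_dvd_of_pos hc hx.pos, Nat.le_of_dvd hx.pos hc⟩
  exact ⟨_, (isEvenlySpaced_iff_eq_filter hc).2 ⟨_, Nat.mod_lt x hspacing, rfl⟩,
    Finset.mem_filter.2 ⟨Finset.mem_range.2 hx, rfl⟩⟩

namespace IsEvenlySpaced

variable {N b c x y : ℕ} {S T : Finset ℕ}

theorem card_le (hS : IsEvenlySpaced N c S) : S.card ≤ c := by
  obtain ⟨d, -, rfl⟩ := hS
  exact Finset.card_image_le.trans_eq (Finset.card_range c)

theorem subset_range (hS : IsEvenlySpaced N c S) (hc : c ∣ N) : S ⊆ Finset.range N := by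
  obtain ⟨d, -, rfl⟩ := (isEvenlySpaced_iff_eq_filter hc).1 hS
  exact Finset.filter_subset _ _

theorem mem_iff_modEq (hS : IsEvenlySpaced N c S) (hc : c ∣ N) (hx : x ∈ S) :
    y ∈ S ↔ y < N ∧ y ≡ x [MOD N / c] := by
  obtain ⟨d, -, rfl⟩ := (isEvenlySpaced_iff_eq_filter hc).1 hS
  obtain ⟨-, rfl⟩ := Finset.mem_filter.1 hx
  simp only [Finset.mem_filter, Finset.mem_range, Nat.ModEq]

theorem subset_or_disjoint (hT : IsEvenlySpaced N b T) (hS : IsEvenlySpaced N c S)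
    (hbc : b ∣ c) (hc : c ∣ N) : T ⊆ S ∨ Disjoint T S := by
  refine or_iff_not_imp_right.2 fun hTS y hyT => ?_
  obtain ⟨x, hxT, hxS⟩ := Finset.not_disjoint_iff.1 hTS
  obtain ⟨hyN, hyx⟩ := (hT.mem_iff_modEq (hbc.trans hc) hxT).1 hyT
  exact (hS.mem_iff_modEq hc hxS).2 ⟨hyN, hyx.of_dvd (Nat.div_dvd_div_left hc hbc)⟩

end IsEvenlySpaced

theorem exists_lt_forall_notMem_of_sum_card_lt {ι : Type*} {s : Finset ι} {S : ι → Finset ℕ}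
    {N : ℕ} (h : ∑ k ∈ s, (S k).card < N) : ∃ x < N, ∀ k ∈ s, x ∉ S k := by
  have hcard : (s.biUnion S).card < (Finset.range N).card := by
    simpa only [Finset.card_range] using Finset.card_biUnion_le.trans_lt h
  simpa using Finset.exists_mem_notMem_of_card_lt_card hcard

theorem exists_isEvenlySpaced_forall_disjoint {ι : Type*} {s : Finset ι} {N b : ℕ} {c : ι → ℕ}
    {S : ι → Finset ℕ} (hb : b ∣ N) (hc : ∀ k ∈ s, c k ∣ N) (hbc : ∀ k ∈ s, b ∣ c k)
    (hS : ∀ k ∈ s, IsEvenlySpaced N (c k) (S k)) (hsum : ∑ k ∈ s, c k < N) :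
    ∃ T, IsEvenlySpaced N b T ∧ ∀ k ∈ s, Disjoint T (S k) := by
  obtain ⟨x, hxN, hxS⟩ := exists_lt_forall_notMem_of_sum_card_lt
    ((Finset.sum_le_sum fun k hk => (hS k hk).card_le).trans_lt hsum)
  obtain ⟨T, hT, hxT⟩ := exists_isEvenlySpaced_mem hb hxN
  refine ⟨T, hT, fun k hk => ?_⟩
  exact (hT.subset_or_disjoint (hS k hk) (hbc k hk) (hc k hk)).resolve_left
    fun hTS => hxS k hk (hTS hxT)

theorem pairwiseDisjoint_insert_update {ι α : Type*} [DecidableEq ι] [PartialOrder α] [OrderBot α]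
    {s : Set ι} {f : ι → α} {a : ι} {v : α} (ha : a ∉ s) (hf : s.PairwiseDisjoint f)
    (hv : ∀ k ∈ s, Disjoint v (f k)) :
    (insert a s).PairwiseDisjoint (Function.update f a v) := by
  have hupdate : ∀ k ∈ s, Function.update f a v k = f k := fun k hk =>
    Function.update_of_ne (ne_of_mem_of_not_mem hk ha) v f
  refine (Set.pairwiseDisjoint_insert_of_notMem ha).2 ⟨fun k hk l hl hkl => ?_, fun k hk => ?_⟩
  · simpa only [Function.onFun, hupdate k hk, hupdate l hl] using hf hk hl hkl
  · simpa only [Function.update_self, hupdate k hk] using hv k hk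

theorem isChain_dvd_image_pow {ι M : Type*} [Monoid M] (b : M) (n : ι → ℕ) (s : Set ι) :
    IsChain (· ∣ ·) ((fun k => b ^ n k) '' s) := by
  rintro _ ⟨k, -, rfl⟩ _ ⟨l, -, rfl⟩ -
  exact (le_total (n k) (n l)).imp (pow_dvd_pow b) (pow_dvd_pow b)

theorem dvd_of_le_of_isChain_dvd {t : Set ℕ} {a b : ℕ} (ht : IsChain (· ∣ ·) t) (ha : a ∈ t)
    (hb : b ∈ t) (hpos : 0 < a) (hab : a ≤ b) : a ∣ b :=
  (ht.total ha hb).elim id fun hba => (hab.antisymm (Nat.le_of_dvd hpos hba)).dvd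

theorem ifdma_full_loading_general {ι : Type*} {s : Finset ι} {N : ℕ} {c : ι → ℕ} (hN : N ≠ 0)
    (hc : ∀ k ∈ s, c k ∣ N) (hchain : IsChain (· ∣ ·) (c '' s)) (hsum : ∑ k ∈ s, c k ≤ N) :
    ∃ S : ι → Finset ℕ, (s : Set ι).PairwiseDisjoint S ∧
      ∀ k ∈ s, IsEvenlySpaced N (c k) (S k) := by
  classical
  induction s using Finset.induction_on_min_value c with
  | empty => exact ⟨fun _ => ∅, by simp, by simp⟩
  | insert a s ha hmin ih =>
    obtain ⟨hca, hcs⟩ := (Finset.forall_mem_insert _ _ _).1 hc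
    have hpos : 0 < c a := Nat.pos_of_dvd_of_pos hca (Nat.pos_of_ne_zero hN)
    have hsum_lt : ∑ k ∈ s, c k < N := by
      rw [Finset.sum_insert ha] at hsum
      lia
    have hdvd : ∀ k ∈ s, c a ∣ c k := fun k hk =>
      dvd_of_le_of_isChain_dvd hchain (Set.mem_image_of_mem c (Finset.mem_insert_self a s))
        (Set.mem_image_of_mem c (Finset.mem_insert_of_mem hk)) hpos (hmin k hk)
    obtain ⟨S, hdisj, hS⟩ := ih hcs
      (hchain.mono (Set.image_mono (Finset.coe_subset.2 (Finset.subset_insert a s)))) hsum_lt.le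
    obtain ⟨T, hT, hTS⟩ := exists_isEvenlySpaced_forall_disjoint hca hcs hdvd hS hsum_lt
    refine ⟨Function.update S a T, ?_, (Finset.forall_mem_insert _ _ _).2 ⟨?_, fun k hk => ?_⟩⟩
    · rw [Finset.coe_insert]
      exact pairwiseDisjoint_insert_update ha hdisj hTS
    · rwa [Function.update_self]
    · rw [Function.update_of_ne (ne_of_mem_of_not_mem hk ha)]
      exact hS k hk

/-- Theorem 1 (full loading is possible in IFDMA): if `∑_k 2^{n_k} ≤ 2^m`, then the
requests can be granted pairwise disjoint evenly-spaced subcarrier sets, each of size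
`2^{n_k}` with spacing `2^{m−n_k}`. -/
theorem ifdma_full_loading (m K : ℕ) (n : ℕ → ℕ)
    (hn : ∀ k < K, n k ≤ m)
    (hsum : ∑ k ∈ Finset.range K, 2 ^ n k ≤ 2 ^ m) :
    ∃ S : ℕ → Finset ℕ,
      (∀ k < K, ∀ l < K, k ≠ l → Disjoint (S k) (S l)) ∧
      (∀ k < K, S k ⊆ Finset.range (2 ^ m)) ∧
      (∀ k < K, ∃ d < 2 ^ (m - n k), S k = evenSpaced m (n k) d) := by
  simp only [← Finset.mem_range (n := K)] at hn ⊢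
  have hdvd : ∀ k ∈ Finset.range K, 2 ^ n k ∣ 2 ^ m := fun k hk => pow_dvd_pow 2 (hn k hk)
  obtain ⟨S, hdisj, hS⟩ := ifdma_full_loading_general (by positivity) hdvd
    (isChain_dvd_image_pow 2 n _) hsum
  exact ⟨S, fun k hk l hl hkl => hdisj hk hl hkl,
    fun k hk => (hS k hk).subset_range (hdvd k hk),
    fun k hk => (isEvenlySpaced_two_pow_iff (hn k hk)).1 (hS k hk)⟩
end

section
/- (Invariant preservation of the min-small-change policy.) Let m, n be natural numbers with n ≤ m. Suppose F ⊆ {0,1,…,2^m−1} is a disjoint union of aligned blocks whose sizes are pairwise distinct powers of two, and suppose 2^n ≤ |F|. Then there exists an aligned block A ⊆ F with |A| = 2^n such that F \ A is again a disjoint union of aligned blocks whose sizes are pairwise distinct powers of two (where the empty set counts as such a union). -/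
/-!
Take the smallest block of `F` of size `2 ^ i ≥ 2 ^ n`; one exists because distinct powers of two
below `2 ^ n` sum to less than `2 ^ n`. Halve it repeatedly, keeping each upper half free and
halving the lower one, until a block of size `2 ^ n` is left to grant. The upper halves have sizes
`2 ^ (i - 1), …, 2 ^ n`, and by the minimality of `i` none of these occurs elsewhere in `F`.
-/

/-- The aligned block of size `2^i` with index `c`: `{c·2^i, …, (c+1)·2^i−1}`. -/
def alignedBlock (i c : ℕ) : Finset ℕ := Finset.Ico (c * 2 ^ i) ((c + 1) * 2 ^ i)

/-- `F ⊆ {0,…,2^m−1}` is a disjoint union of aligned blocks whose sizes are pairwise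
distinct powers of two (the empty union being allowed). -/
def GoodFree (m : ℕ) (F : Finset ℕ) : Prop :=
  ∃ (E : Finset ℕ) (c : ℕ → ℕ),
    (∀ i ∈ E, i ≤ m ∧ c i < 2 ^ (m - i)) ∧
    (∀ i ∈ E, ∀ j ∈ E, i ≠ j → Disjoint (alignedBlock i (c i)) (alignedBlock j (c j))) ∧
    F = E.biUnion fun i => alignedBlock i (c i)

theorem card_alignedBlock (i c : ℕ) : (alignedBlock i c).card = 2 ^ i := by
  rw [alignedBlock, Nat.card_Ico, ← Nat.sub_mul, Nat.add_sub_cancel_left, one_mul]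

theorem disjoint_alignedBlock_of_lt {c d : ℕ} (i : ℕ) (hcd : c < d) :
    Disjoint (alignedBlock i c) (alignedBlock i d) :=
  (Finset.Ico_disjoint_Ico_consecutive _ _ _).mono_left
    (Finset.Ico_subset_Ico_right (Nat.mul_le_mul_right _ hcd))

theorem alignedBlock_succ (i c : ℕ) :
    alignedBlock (i + 1) c = alignedBlock i (2 * c) ∪ alignedBlock i (2 * c + 1) := by
  have h_mul (k : ℕ) : k * 2 ^ (i + 1) = 2 * k * 2 ^ i := by ring
  rw [alignedBlock, alignedBlock, alignedBlock, h_mul, h_mul, mul_add_one,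
    Finset.Ico_union_Ico_eq_Ico] <;> gcongr <;> omega

theorem alignedBlock_subset_range_iff {i c m : ℕ} :
    alignedBlock i c ⊆ Finset.range (2 ^ m) ↔ i ≤ m ∧ c < 2 ^ (m - i) := by
  have h_lt : c * 2 ^ i < (c + 1) * 2 ^ i := by gcongr; omega
  rw [alignedBlock, Finset.range_eq_Ico, Finset.Ico_subset_Ico_iff h_lt,
    and_iff_right (Nat.zero_le _)]
  have h_iff (him : i ≤ m) : (c + 1) * 2 ^ i ≤ 2 ^ m ↔ c < 2 ^ (m - i) := by
    rw [← Nat.pow_sub_mul_pow 2 him, Nat.mul_le_mul_right_iff (by positivity), Nat.succ_le_iff]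
  refine ⟨fun h => ?_, fun ⟨him, hc⟩ => (h_iff him).2 hc⟩
  have him : i ≤ m :=
    (Nat.pow_le_pow_iff_right one_lt_two).1 ((Nat.le_mul_of_pos_left _ c.succ_pos).trans h)
  exact ⟨him, (h_iff him).1 h⟩

/-- `F` is the disjoint union of aligned blocks, one of size `2 ^ i` for each `i ∈ E`. Unlike in
`GoodFree`, the exponents are exposed and the blocks are not confined to an initial segment. -/
def IsAlignedUnion (E F : Finset ℕ) : Prop :=
  ∃ c : ℕ → ℕ, (E : Set ℕ).PairwiseDisjoint (fun i => alignedBlock i (c i)) ∧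
    F = E.biUnion fun i => alignedBlock i (c i)

theorem goodFree_iff {m : ℕ} {F : Finset ℕ} :
    GoodFree m F ↔ F ⊆ Finset.range (2 ^ m) ∧ ∃ E, IsAlignedUnion E F := by
  constructor
  · rintro ⟨E, c, h_bound, h_disj, rfl⟩
    exact ⟨Finset.biUnion_subset.2 fun i hi => alignedBlock_subset_range_iff.2 (h_bound i hi),
      E, c, fun i hi j hj => h_disj i hi j hj, rfl⟩
  · rintro ⟨h_range, E, c, h_disj, rfl⟩
    exact ⟨E, c,
      fun i hi => alignedBlock_subset_range_iff.1 (Finset.biUnion_subset.1 h_range i hi),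
      fun i hi j hj => h_disj hi hj, rfl⟩

namespace IsAlignedUnion

variable {E F : Finset ℕ} {i n a : ℕ}

theorem card_eq (h : IsAlignedUnion E F) : F.card = ∑ i ∈ E, 2 ^ i := by
  obtain ⟨c, h_disj, rfl⟩ := h
  simp only [Finset.card_biUnion h_disj, card_alignedBlock]

theorem exists_mem_le_of_two_pow_le_card (h : IsAlignedUnion E F) (hn : 2 ^ n ≤ F.card) :
    ∃ i ∈ E, n ≤ i := by
  by_contra! h_lt
  exact (Nat.geomSum_lt le_rfl h_lt).not_ge (h.card_eq ▸ hn)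

theorem union_alignedBlock (h : IsAlignedUnion E F) (hi : i ∉ E)
    (hF : Disjoint F (alignedBlock i a)) :
    IsAlignedUnion (insert i E) (F ∪ alignedBlock i a) := by
  obtain ⟨c, h_disj, rfl⟩ := h
  have h_update (j) (hj : j ∈ E) : Function.update c i a j = c j :=
    Function.update_of_ne (ne_of_mem_of_not_mem hj hi) a c
  refine ⟨Function.update c i a, ?_, ?_⟩
  · rw [Finset.coe_insert, Set.pairwiseDisjoint_insert_of_notMem (by exact_mod_cast hi)]
    refine ⟨fun j hj k hk hjk => ?_, fun j hj => ?_⟩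
    · simpa only [Function.onFun, h_update j hj, h_update k hk] using h_disj hj hk hjk
    · simpa only [Function.update_self, h_update j hj] using
        ((Finset.disjoint_biUnion_left _ _ _).1 hF j hj).symm
  · rw [Finset.biUnion_insert, Function.update_self, Finset.union_comm]
    congr 1
    exact Finset.biUnion_congr rfl fun j hj => by rw [h_update j hj]

theorem exists_sdiff_alignedBlock (h : IsAlignedUnion E F) (hi : i ∈ E) :
    ∃ a, alignedBlock i a ⊆ F ∧ IsAlignedUnion (E.erase i) (F \ alignedBlock i a) := by
  obtain ⟨c, h_disj, rfl⟩ := h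
  refine ⟨c i, Finset.subset_biUnion_of_mem (fun j => alignedBlock j (c j)) hi, c,
    h_disj.subset (by exact_mod_cast Finset.erase_subset i E), ?_⟩
  have h_rest : Disjoint (alignedBlock i (c i))
      ((E.erase i).biUnion fun j => alignedBlock j (c j)) :=
    (Finset.disjoint_biUnion_right _ _ _).2 fun j hj =>
      h_disj hi (Finset.mem_of_mem_erase hj) (Finset.ne_of_mem_erase hj).symm
  conv_lhs => rw [← Finset.insert_erase hi, Finset.biUnion_insert]
  exact Finset.union_sdiff_cancel_left h_rest

theorem exists_alignedBlock_subset_union_sdiff (h : IsAlignedUnion E F) (hni : n ≤ i)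
    (hE : Disjoint E (Finset.Ico n i)) (hF : Disjoint F (alignedBlock i a)) :
    ∃ b, alignedBlock n b ⊆ alignedBlock i a ∧
      IsAlignedUnion (E ∪ Finset.Ico n i) (F ∪ alignedBlock i a \ alignedBlock n b) := by
  induction i, hni using Nat.le_induction generalizing E F a with
  | base => exact ⟨a, subset_rfl, by simpa using h⟩
  | succ i hni ih =>
    have h_Ico : Finset.Ico n (i + 1) = insert i (Finset.Ico n i) :=
      (Finset.insert_Ico_right_eq_Ico_add_one hni).symm
    rw [h_Ico, Finset.disjoint_insert_right] at hE
    rw [alignedBlock_succ, Finset.disjoint_union_right] at hF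
    have h_halves := disjoint_alignedBlock_of_lt i (2 * a).lt_succ_self
    obtain ⟨b, hb, h_union⟩ := ih (h.union_alignedBlock hE.1 hF.2)
      (Finset.disjoint_insert_left.2 ⟨by simp, hE.2⟩)
      (Finset.disjoint_union_left.2 ⟨hF.1, h_halves.symm⟩)
    refine ⟨b, ?_, ?_⟩
    · rw [alignedBlock_succ]
      exact hb.trans Finset.subset_union_left
    · have h_upper : Disjoint (alignedBlock i (2 * a + 1)) (alignedBlock n b) :=
        h_halves.symm.mono_right hb
      rwa [h_Ico, Finset.union_insert, ← Finset.insert_union, alignedBlock_succ,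
        Finset.union_sdiff_distrib, Finset.sdiff_eq_self_of_disjoint h_upper,
        Finset.union_comm (_ \ _), ← Finset.union_assoc]

theorem exists_alignedBlock_subset_sdiff (h : IsAlignedUnion E F) (hn : 2 ^ n ≤ F.card) :
    ∃ b, alignedBlock n b ⊆ F ∧ ∃ E', IsAlignedUnion E' (F \ alignedBlock n b) := by
  obtain ⟨i, ⟨hi, hni⟩, h_min⟩ :=
    exists_minimal_of_wellFoundedLT _ (h.exists_mem_le_of_two_pow_le_card hn)
  have h_gap : Disjoint (E.erase i) (Finset.Ico n i) := by
    refine Finset.disjoint_left.2 fun k hk hk_Ico => ?_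
    obtain ⟨hnk, hki⟩ := Finset.mem_Ico.1 hk_Ico
    exact hki.not_ge (h_min ⟨Finset.mem_of_mem_erase hk, hnk⟩ hki.le)
  obtain ⟨a, ha, h_rest⟩ := h.exists_sdiff_alignedBlock hi
  obtain ⟨b, hb, h_union⟩ :=
    h_rest.exists_alignedBlock_subset_union_sdiff hni h_gap Finset.sdiff_disjoint
  rw [Finset.sdiff_union_sdiff_cancel ha hb] at h_union
  exact ⟨b, hb.trans ha, _, h_union⟩

end IsAlignedUnion

/-- Invariant preservation of the min-small-change policy: if the free set `F` is a
disjoint union of aligned blocks of pairwise distinct power-of-two sizes and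
`2^n ≤ |F|`, then some aligned block `A ⊆ F` of size `2^n` can be granted so that
`F \ A` again has this form. -/
theorem min_small_change_invariant (m n : ℕ) (hnm : n ≤ m)
    (F : Finset ℕ) (hF : GoodFree m F) (hcard : 2 ^ n ≤ F.card) :
    ∃ a < 2 ^ (m - n), alignedBlock n a ⊆ F ∧ GoodFree m (F \ alignedBlock n a) := by
  obtain ⟨h_range, E, hE⟩ := goodFree_iff.1 hF
  obtain ⟨a, ha, h_rest⟩ := hE.exists_alignedBlock_subset_sdiff hcard
  obtain ⟨-, ha_lt⟩ := alignedBlock_subset_range_iff.1 (ha.trans h_range)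
  exact ⟨a, ha_lt, ha, goodFree_iff.2 ⟨Finset.sdiff_subset.trans h_range, h_rest⟩⟩
end

section
/- (Corollary 3: subcarrier allocation for direct-conversion receivers.) Let m be a natural number, let s ∈ {0,1,…,2^m−1} be a designated unavailable subcarrier index (the DC subcarrier), and let n_1, …, n_K ∈ {0,1,…,m} be such that ∑_{k=1}^K 2^{n_k} ≤ 2^m − 1. Then there exist pairwise disjoint sets S_1, …, S_K ⊆ {0,1,…,2^m−1} \ {s} such that for each k, S_k = {d_k + i·2^{m−n_k} : i = 0,1,…,2^{n_k}−1} for some offset d_k with 0 ≤ d_k < 2^{m−n_k}. -/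
/-!
An evenly-spaced set of size `2 ^ n` is a residue class modulo `2 ^ (m - n)`, cut down to
`{0, …, 2 ^ m - 1}`, and the moduli form a chain under divisibility. Serve the requests greedily,
in order of increasing modulus. When the request with modulus `Q` comes up, a class already
granted modulo `q` is a union of `Q / q` classes modulo `Q`, and the unavailable index rules out
one more class. The bound on the total load says exactly that these, together with one class for
the current request, number at most `Q`, so an admissible class modulo `Q` is left.
-/

open Finset

section ResidueClasses

variable {ι : Type*} {T : Finset ι} {q : ι → ℕ}

theorem card_filter_range_modEq_of_dvd {q Q : ℕ} (hqQ : q ∣ Q) (r : ℕ) :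
    #{x ∈ range Q | x ≡ r [MOD q]} = Q / q := by
  obtain rfl | hQ := Q.eq_zero_or_pos
  · simp
  · rw [← Nat.count_eq_card_filter_range, Nat.count_modEq_card _ (Nat.pos_of_dvd_of_pos hqQ hQ),
      Nat.mod_eq_zero_of_dvd hqQ, if_neg (Nat.not_lt_zero _), add_zero]

theorem exists_lt_notMem_forall_not_modEq {Q : ℕ} (F : Finset ℕ) (r : ι → ℕ)
    (hqQ : ∀ k ∈ T, q k ∣ Q) (hcard : #F + ∑ k ∈ T, Q / q k < Q) :
    ∃ c < Q, c ∉ F ∧ ∀ k ∈ T, ¬ c ≡ r k [MOD q k] := by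
  let covered := T.biUnion fun k ↦ {x ∈ range Q | x ≡ r k [MOD q k]}
  have hcovered : #covered ≤ ∑ k ∈ T, Q / q k :=
    card_biUnion_le.trans_eq <|
      sum_congr rfl fun k hk ↦ card_filter_range_modEq_of_dvd (hqQ k hk) (r k)
  have hlt : #(F ∪ covered) < #(range Q) := by
    rw [card_range]
    exact (card_union_le _ _).trans_lt ((Nat.add_le_add_left hcovered _).trans_lt hcard)
  obtain ⟨c, hcQ, hc⟩ := exists_mem_notMem_of_card_lt_card hlt
  rw [mem_union, not_or] at hc
  exact ⟨c, mem_range.1 hcQ, hc.1, fun k hk hck ↦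
    hc.2 (mem_biUnion.2 ⟨k, hk, mem_filter.2 ⟨hcQ, hck⟩⟩)⟩

theorem disjoint_setOf_modEq_of_dvd {q Q c r : ℕ} (hqQ : q ∣ Q) (hcr : ¬ c ≡ r [MOD q]) :
    Disjoint {x | x ≡ c [MOD Q]} {x | x ≡ r [MOD q]} :=
  Set.disjoint_left.2 fun _ hxc hxr ↦ hcr ((Nat.ModEq.of_dvd hqQ hxc).symm.trans hxr)

theorem sum_div_lt_of_dvd {M Q : ℕ} (hQM : Q ∣ M) (hqQ : ∀ k ∈ T, q k ∣ Q)
    (hsum : ∑ k ∈ T, M / q k < M) : ∑ k ∈ T, Q / q k < Q := by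
  obtain ⟨t, rfl⟩ := hQM
  refine lt_of_mul_lt_mul_of_nonneg_right (a := t) ?_ t.zero_le
  calc (∑ k ∈ T, Q / q k) * t = ∑ k ∈ T, Q * t / q k := by
        rw [sum_mul]
        exact sum_congr rfl fun k hk ↦ (Nat.div_mul_right_comm (hqQ k hk) t)
    _ < Q * t := hsum

theorem dvd_of_isChain_of_le {A : Set ℕ} (hA : IsChain (· ∣ ·) A) {a b : ℕ} (ha : a ∈ A)
    (hb : b ∈ A) (ha₀ : 0 < a) (hab : a ≤ b) : a ∣ b :=
  (hA.total ha hb).elim id fun hba ↦ (hab.antisymm (Nat.le_of_dvd ha₀ hba)).dvd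

theorem exists_pairwiseDisjoint_setOf_modEq {M : ℕ} (hqM : ∀ k ∈ T, q k ∣ M)
    (hchain : IsChain (· ∣ ·) (q '' T)) (hsum : ∑ k ∈ T, M / q k < M) (s : ℕ) :
    ∃ r : ι → ℕ, (∀ k ∈ T, r k < q k ∧ ¬ s ≡ r k [MOD q k]) ∧
      (T : Set ι).PairwiseDisjoint fun k ↦ {x | x ≡ r k [MOD q k]} := by
  classical
  induction T using Finset.induction_on_max_value q with
  | empty => exact ⟨0, by simp⟩
  | insert a T haT hmax ih =>
    obtain ⟨r, hr, hdisj⟩ := ih (fun k hk ↦ hqM k (mem_insert_of_mem hk))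
      (hchain.mono (Set.image_mono (coe_subset.2 (subset_insert a T))))
      ((sum_le_sum_of_subset (subset_insert a T)).trans_lt hsum)
    have hpos : ∀ k ∈ insert a T, 0 < q k := fun k hk ↦
      Nat.pos_of_dvd_of_pos (hqM k hk) (Nat.zero_lt_of_lt hsum)
    have hdvd : ∀ k ∈ insert a T, q k ∣ q a := fun k hk ↦
      dvd_of_isChain_of_le hchain (Set.mem_image_of_mem q hk)
        (Set.mem_image_of_mem q (mem_insert_self a T)) (hpos k hk)
        ((mem_insert.1 hk).elim (fun h ↦ h ▸ le_rfl) (hmax k))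
    have hload : 1 + ∑ k ∈ T, q a / q k < q a := by
      simpa only [sum_insert haT, Nat.div_self (hpos a (mem_insert_self a T))] using
        sum_div_lt_of_dvd (hqM a (mem_insert_self a T)) hdvd hsum
    obtain ⟨c, hca, hcs, hcr⟩ := exists_lt_notMem_forall_not_modEq {s % q a} r
      (fun k hk ↦ hdvd k (mem_insert_of_mem hk)) hload
    have hsc : ¬ s ≡ c [MOD q a] := fun h ↦
      hcs (mem_singleton.2 ((Nat.mod_eq_of_lt hca).symm.trans h.symm))
    have hupdate : ∀ k ∈ T, Function.update r a c k = r k := fun k hk ↦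
      Function.update_of_ne (ne_of_mem_of_not_mem hk haT) c r
    refine ⟨Function.update r a c, ?_, ?_⟩
    · rw [forall_mem_insert, Function.update_self]
      exact ⟨⟨hca, hsc⟩, fun k hk ↦ (hupdate k hk).symm ▸ hr k hk⟩
    · rw [coe_insert, Set.pairwiseDisjoint_insert_of_notMem (mod_cast haT)]
      refine ⟨fun k hk l hl hkl ↦ ?_, fun k hk ↦ ?_⟩
      · simpa only [Function.onFun, hupdate k hk, hupdate l hl] using hdisj hk hl hkl
      · simpa only [Function.update_self, hupdate k hk] using
          disjoint_setOf_modEq_of_dvd (hdvd k (mem_insert_of_mem hk)) (hcr k hk)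

end ResidueClasses

theorem image_add_mul_range {q d : ℕ} (hd : d < q) (N : ℕ) :
    (range N).image (fun i ↦ d + i * q) = {x ∈ range (N * q) | x ≡ d [MOD q]} := by
  ext x
  simp only [mem_image, mem_filter, mem_range]
  constructor
  · rintro ⟨i, hi, rfl⟩
    refine ⟨?_, by simp [Nat.ModEq]⟩
    calc d + i * q < q + i * q := Nat.add_lt_add_right hd _
      _ = (i + 1) * q := by ring
      _ ≤ N * q := Nat.mul_le_mul_right q hi
  · rintro ⟨hx, hxd⟩
    refine ⟨x / q, Nat.div_lt_of_lt_mul (mul_comm N q ▸ hx), ?_⟩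
    rw [← Nat.mod_eq_of_lt hd, ← hxd, Nat.mod_add_div']

theorem evenSpaced_eq_filter_modEq {m n d : ℕ} (hn : n ≤ m) (hd : d < 2 ^ (m - n)) :
    evenSpaced m n d = {x ∈ range (2 ^ m) | x ≡ d [MOD 2 ^ (m - n)]} := by
  rw [evenSpaced, image_add_mul_range hd, ← pow_add, Nat.add_sub_cancel' hn]

theorem isChain_dvd_range_pow (b : ℕ) : IsChain (· ∣ ·) (Set.range fun e : ℕ ↦ b ^ e) := by
  rintro _ ⟨i, rfl⟩ _ ⟨j, rfl⟩ _
  exact (le_total i j).imp (pow_dvd_pow b) (pow_dvd_pow b)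

/-- Corollary 3 (subcarrier allocation for direct-conversion receivers): with one
designated unavailable subcarrier `s`, any requests of sizes `2^{n_k}` totaling at most
`2^m − 1` can be granted pairwise disjoint evenly-spaced sets avoiding `s`. -/
theorem ifdma_dcr_allocation (m : ℕ) (s : ℕ) (hs : s < 2 ^ m)
    (K : ℕ) (n : ℕ → ℕ) (hn : ∀ k < K, n k ≤ m)
    (hsum : ∑ k ∈ Finset.range K, 2 ^ n k ≤ 2 ^ m - 1) :
    ∃ S : ℕ → Finset ℕ,
      (∀ k < K, ∀ l < K, k ≠ l → Disjoint (S k) (S l)) ∧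
      (∀ k < K, S k ⊆ Finset.range (2 ^ m) \ {s}) ∧
      (∀ k < K, ∃ d < 2 ^ (m - n k), S k = evenSpaced m (n k) d) := by
  have hload : ∑ k ∈ range K, 2 ^ m / 2 ^ (m - n k) < 2 ^ m := by
    have hsize : ∀ k ∈ range K, 2 ^ m / 2 ^ (m - n k) = 2 ^ n k := fun k hk ↦ by
      rw [Nat.pow_div (Nat.sub_le _ _) two_pos, Nat.sub_sub_self (hn k (mem_range.1 hk))]
    rw [sum_congr rfl hsize]
    exact Nat.lt_of_le_pred (Nat.two_pow_pos m) hsum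
  have hchain : IsChain (· ∣ ·) ((fun k ↦ 2 ^ (m - n k)) '' (range K : Set ℕ)) :=
    (isChain_dvd_range_pow 2).mono (Set.image_subset_iff.2 fun k _ ↦ Set.mem_range_self (m - n k))
  obtain ⟨d, hd, hdisj⟩ := exists_pairwiseDisjoint_setOf_modEq
    (fun k _ ↦ pow_dvd_pow 2 (Nat.sub_le m (n k))) hchain hload s
  have hmem : ∀ k < K, ∀ x ∈ evenSpaced m (n k) (d k),
      x ∈ range (2 ^ m) ∧ x ≡ d k [MOD 2 ^ (m - n k)] := fun k hk x hx ↦ by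
    rwa [evenSpaced_eq_filter_modEq (hn k hk) (hd k (mem_range.2 hk)).1, mem_filter] at hx
  refine ⟨fun k ↦ evenSpaced m (n k) (d k), fun k hk l hl hkl ↦ ?_, fun k hk x hx ↦ ?_,
    fun k hk ↦ ⟨d k, (hd k (mem_range.2 hk)).1, rfl⟩⟩
  · exact disjoint_coe.1 <| (hdisj (mem_range.2 hk) (mem_range.2 hl) hkl).mono
      (fun x hx ↦ (hmem k hk x hx).2) (fun x hx ↦ (hmem l hl x hx).2)
  · obtain ⟨hxm, hxd⟩ := hmem k hk x hx
    exact mem_sdiff.2 ⟨hxm, fun hxs ↦ (hd k (mem_range.2 hk)).2 (mem_singleton.1 hxs ▸ hxd)⟩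
end

section
/- (Theorem 6: strictly nonblocking property of asynchronous IFDMA under an offered-load limit.) Let m be a natural number and define C(m) = 2^{(m/2)+1} if m is even and C(m) = 3·2^{(m−1)/2} if m is odd. Then: (i) for every n ∈ {0,1,…,m} and every set B ⊆ {0,1,…,2^m−1} with |B| + 2^n < C(m), there exists an offset d with 0 ≤ d < 2^{m−n} such that the evenly-spaced set {d + i·2^{m−n} : i = 0,1,…,2^n−1} is disjoint from B; (ii) the bound is tight: there exist n ∈ {0,1,…,m} and a finite family of pairwise disjoint evenly-spaced sets in {0,1,…,2^m−1} whose total cardinality T satisfies T + 2^n = C(m), such that every evenly-spaced set of size 2^n intersects the union of the family. -/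
/-!
The `2^(m-n)` evenly-spaced sets of size `2^n` are residue classes modulo `2^(m-n)`, hence pairwise
disjoint, so blocking all of them takes at least `2^(m-n)` occupied subcarriers, and the single
subcarriers `0, …, 2^(m-n) - 1` suffice. The least total blocking load is therefore the minimum of
`2^n + 2^(m-n)` over `n ≤ m`; by convexity it is attained at `n = m / 2`, where it equals `C(m)`.
-/

section PowerSums

variable {R : Type*} [CommSemiring R] [PartialOrder R] [IsStrictOrderedRing R]
  [ExistsAddOfLE R] {x : R}

theorem pow_add_pow_le_pow_add_pow_of_add_eq_add (hx : 1 ≤ x) {a b c d : ℕ} (hab : a ≤ b)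
    (hac : a ≤ c) (h : a + d = b + c) : x ^ b + x ^ c ≤ x ^ a + x ^ d := by
  obtain ⟨i, rfl⟩ := Nat.exists_eq_add_of_le hab
  obtain ⟨j, rfl⟩ := Nat.exists_eq_add_of_le hac
  obtain rfl : d = a + i + j := by omega
  calc x ^ (a + i) + x ^ (a + j) = x ^ a * x ^ j + x ^ (a + i) * 1 := by ring
    _ ≤ x ^ a * 1 + x ^ (a + i) * x ^ j :=
      mul_add_mul_le_mul_add_mul (pow_le_pow_right₀ hx (Nat.le_add_right a i)) (one_le_pow₀ hx)
    _ = x ^ a + x ^ (a + i + j) := by ring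

theorem pow_half_add_pow_sub_half_le_pow_add_pow_sub (hx : 1 ≤ x) {m n : ℕ} (hn : n ≤ m) :
    x ^ (m / 2) + x ^ (m - m / 2) ≤ x ^ n + x ^ (m - n) := by
  rcases le_or_gt n (m / 2) with h | h
  · exact pow_add_pow_le_pow_add_pow_of_add_eq_add hx h (by omega) (by omega)
  · rw [add_comm (x ^ n)]
    exact pow_add_pow_le_pow_add_pow_of_add_eq_add hx (by omega) (by omega) (by omega)

end PowerSums

theorem two_pow_half_add_two_pow_sub_half_eq_ite (m : ℕ) :
    2 ^ (m / 2) + 2 ^ (m - m / 2) =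
      if Even m then 2 ^ (m / 2 + 1) else 3 * 2 ^ ((m - 1) / 2) := by
  split_ifs with hm
  · rw [show m - m / 2 = m / 2 by grind]
    ring
  · rw [show m - m / 2 = m / 2 + 1 by grind, show (m - 1) / 2 = m / 2 by grind]
    ring

theorem exists_disjoint_of_card_lt_of_pairwiseDisjoint {ι α : Type*} {s : Finset ι}
    {f : ι → Finset α} (hf : (s : Set ι).PairwiseDisjoint f) {B : Finset α}
    (hB : B.card < s.card) : ∃ i ∈ s, Disjoint (f i) B := by
  classical
  by_contra! hmeet
  have hmeet_card : s.card ≤ (s.biUnion fun i => f i ∩ B).card :=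
    Finset.card_le_card_biUnion (hf.mono fun _ => Finset.inter_subset_left)
      fun i hi => Finset.not_disjoint_iff_nonempty_inter.mp (hmeet i hi)
  have hsub : (s.biUnion fun i => f i ∩ B) ⊆ B :=
    Finset.biUnion_subset.mpr fun _ _ => Finset.inter_subset_right
  exact (hmeet_card.trans (Finset.card_le_card hsub)).not_gt hB

section EvenSpaced

variable {m n d x : ℕ}

theorem evenSpaced_zero (m d : ℕ) : evenSpaced m 0 d = {d} := by
  simp [evenSpaced]

theorem self_mem_evenSpaced (m n d : ℕ) : d ∈ evenSpaced m n d :=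
  Finset.mem_image.mpr ⟨0, by simp, by simp⟩

theorem modEq_of_mem_evenSpaced (hx : x ∈ evenSpaced m n d) : x ≡ d [MOD 2 ^ (m - n)] := by
  obtain ⟨i, -, rfl⟩ := Finset.mem_image.mp hx
  simp [Nat.ModEq]

theorem pairwiseDisjoint_evenSpaced (m n : ℕ) :
    (Finset.range (2 ^ (m - n)) : Set ℕ).PairwiseDisjoint (evenSpaced m n) := by
  intro d hd e he hde
  refine Finset.disjoint_left.mpr fun x hxd hxe => hde ?_
  have hmod : d ≡ e [MOD 2 ^ (m - n)] :=
    (modEq_of_mem_evenSpaced hxd).symm.trans (modEq_of_mem_evenSpaced hxe)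
  exact hmod.eq_of_lt_of_lt (Finset.mem_range.mp hd) (Finset.mem_range.mp he)

theorem exists_disjoint_evenSpaced {B : Finset ℕ} (hB : B.card < 2 ^ (m - n)) :
    ∃ d < 2 ^ (m - n), Disjoint (evenSpaced m n d) B := by
  simpa only [Finset.mem_range] using
    exists_disjoint_of_card_lt_of_pairwiseDisjoint (pairwiseDisjoint_evenSpaced m n)
      (hB.trans_eq (Finset.card_range _).symm)

theorem evenSpaced_inter_range_nonempty (hd : d < 2 ^ (m - n)) :
    (evenSpaced m n d ∩ Finset.range (2 ^ (m - n))).Nonempty :=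
  ⟨d, Finset.mem_inter.mpr ⟨self_mem_evenSpaced m n d, Finset.mem_range.mpr hd⟩⟩

theorem biUnion_evenSpaced_zero (m : ℕ) (s : Finset ℕ) : s.biUnion (evenSpaced m 0) = s := by
  simp only [funext (evenSpaced_zero m), Finset.biUnion_singleton_eq_self]

end EvenSpaced

/-- Theorem 6 (strictly nonblocking property of asynchronous IFDMA under an
offered-load limit): with `C(m) = 2^{m/2+1}` for even `m` and `3·2^{(m−1)/2}` for odd
`m`, (i) whenever `|B| + 2^n < C(m)` some evenly-spaced set of size `2^n` avoids `B`;
and (ii) the bound is tight: some family of pairwise disjoint evenly-spaced sets of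
total size `T` with `T + 2^n = C(m)` blocks every evenly-spaced set of size `2^n`. -/
theorem ifdma_strictly_nonblocking_threshold (m : ℕ) (C : ℕ)
    (hC : C = if Even m then 2 ^ (m / 2 + 1) else 3 * 2 ^ ((m - 1) / 2)) :
    (∀ n ≤ m, ∀ B : Finset ℕ, B ⊆ Finset.range (2 ^ m) → B.card + 2 ^ n < C →
      ∃ d < 2 ^ (m - n), Disjoint (evenSpaced m n d) B) ∧
    (∃ n ≤ m, ∃ (L : ℕ) (sz off : ℕ → ℕ),
      (∀ l < L, sz l ≤ m ∧ off l < 2 ^ (m - sz l)) ∧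
      (∀ l < L, ∀ l' < L, l ≠ l' →
        Disjoint (evenSpaced m (sz l) (off l)) (evenSpaced m (sz l') (off l'))) ∧
      (∑ l ∈ Finset.range L, 2 ^ sz l) + 2 ^ n = C ∧
      (∀ d < 2 ^ (m - n),
        (evenSpaced m n d ∩
          (Finset.range L).biUnion (fun l => evenSpaced m (sz l) (off l))).Nonempty)) := by
  rw [← two_pow_half_add_two_pow_sub_half_eq_ite] at hC
  refine ⟨fun n hn B _ hload => ?_, ?_⟩
  · have hC_le : C ≤ 2 ^ n + 2 ^ (m - n) :=
      hC.trans_le (pow_half_add_pow_sub_half_le_pow_add_pow_sub one_le_two hn)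
    exact exists_disjoint_evenSpaced (by omega)
  · refine ⟨m / 2, Nat.div_le_self m 2, 2 ^ (m - m / 2), fun _ => 0, fun l => l,
      fun l hl => ⟨Nat.zero_le m, ?_⟩, fun l _ l' _ hne => ?_, ?_, fun d hd => ?_⟩
    · exact hl.trans_le (Nat.pow_le_pow_right two_pos (Nat.sub_le m (m / 2)))
    · simpa only [evenSpaced_zero, Finset.disjoint_singleton] using hne
    · simp [hC, add_comm]
    · rw [biUnion_evenSpaced_zero]
      exact evenSpaced_inter_range_nonempty hd
end

section
/- (Proposition 8, counting part.) For a natural number m, call a family of subsets of {0,1,…,2^m−1} a state if its members are pairwise disjoint aligned blocks (each of some power-of-two size). Let f(m) be the number of states. Then f(0) = 2 and f(m) = f(m−1)² + 1 for every m ≥ 1. -/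
/-- A state of the system with `2^m` bins: a family of pairwise disjoint aligned
blocks (each of some power-of-two size) in `{0,…,2^m−1}`. -/
def IsState (m : ℕ) (S : Finset (Finset ℕ)) : Prop :=
  (∀ A ∈ S, ∃ i c, i ≤ m ∧ c < 2 ^ (m - i) ∧ A = alignedBlock i c) ∧
  (∀ A ∈ S, ∀ B ∈ S, A ≠ B → Disjoint A B)

/-!
The aligned blocks in `{0, …, 2^(m+1) - 1}` are the full block, the aligned blocks of the left
half, and translates by `2^m` of the latter. The full block meets every block, so it only occurs
alone; blocks in different halves never meet, so a state without the full block is an arbitrary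
pair of states of the two halves.
-/

section Packings

variable {α β : Type*} [PartialOrder α] [OrderBot α] [PartialOrder β] [OrderBot β]

/-- The packings from a family `𝓑` in an order with least element: the finite subfamilies of `𝓑`
whose members are pairwise disjoint. -/
def packings (𝓑 : Set α) : Set (Finset α) :=
  {S | (S : Set α) ⊆ 𝓑 ∧ (S : Set α).PairwiseDisjoint id}

theorem packings_empty : packings (∅ : Set α) = {∅} := by
  ext S
  simp +contextual [packings, Set.subset_empty_iff]

theorem packings_mono {𝓐 𝓑 : Set α} (h : 𝓐 ⊆ 𝓑) : packings 𝓐 ⊆ packings 𝓑 :=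
  fun _ hS => ⟨hS.1.trans h, hS.2⟩

theorem finite_packings {𝓑 : Set α} (h𝓑 : 𝓑.Finite) : (packings 𝓑).Finite :=
  (h𝓑.finite_subsets.preimage Finset.coe_injective.injOn).subset fun _ hS => hS.1

theorem packings_insert {𝓑 : Set α} {t : α} (h : ∀ b ∈ 𝓑, ¬Disjoint b t) :
    packings (insert t 𝓑) = insert {t} (packings 𝓑) := by
  refine Set.Subset.antisymm (fun S hS => ?_) (Set.insert_subset ?_ ?_)
  · by_cases htS : t ∈ S
    · refine .inl (Finset.eq_singleton_iff_unique_mem.2 ⟨htS, fun b hb => ?_⟩)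
      by_contra hbt
      exact h b ((hS.1 hb).resolve_left hbt) (hS.2 hb htS hbt)
    · exact .inr ⟨(Set.subset_insert_iff_of_notMem htS).1 hS.1, hS.2⟩
  · simp [packings]
  · exact packings_mono (Set.subset_insert t 𝓑)

theorem ncard_packings_insert {𝓑 : Set α} {t : α} (h𝓑 : 𝓑.Finite) (ht : t ∉ 𝓑)
    (h : ∀ b ∈ 𝓑, ¬Disjoint b t) :
    (packings (insert t 𝓑)).ncard = (packings 𝓑).ncard + 1 := by
  have singleton_notMem : {t} ∉ packings 𝓑 := fun hS => ht (hS.1 (by simp))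
  rw [packings_insert h, Set.ncard_insert_of_notMem singleton_notMem (finite_packings h𝓑)]

theorem packings_union [DecidableEq α] {𝓐 𝓑 : Set α} (h : ∀ a ∈ 𝓐, ∀ b ∈ 𝓑, Disjoint a b) :
    packings (𝓐 ∪ 𝓑) = (fun p => p.1 ∪ p.2) '' packings 𝓐 ×ˢ packings 𝓑 := by
  classical
  ext S
  constructor
  · rintro ⟨hS, hdisj⟩
    refine ⟨(S.filter (· ∈ 𝓐), S.filter (· ∈ 𝓑)), ⟨⟨?_, ?_⟩, ⟨?_, ?_⟩⟩, ?_⟩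
    · exact fun _ ha => (Finset.mem_filter.1 ha).2
    · exact hdisj.subset (Finset.filter_subset _ S)
    · exact fun _ hb => (Finset.mem_filter.1 hb).2
    · exact hdisj.subset (Finset.filter_subset _ S)
    · exact (Finset.filter_or _ _ S).symm.trans (Finset.filter_true_of_mem fun _ hx => hS hx)
  · rintro ⟨⟨T, U⟩, ⟨hT, hU⟩, rfl⟩
    simp only [packings, Set.mem_ofPred_eq, Finset.coe_union, Set.pairwiseDisjoint_union]
    exact ⟨Set.union_subset_union hT.1 hU.1, hT.2, hU.2,
      fun a ha b hb _ => h a (hT.1 ha) b (hU.1 hb)⟩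

theorem injOn_union_packings [DecidableEq α] {𝓐 𝓑 : Set α} (h : Disjoint 𝓐 𝓑) :
    (packings 𝓐 ×ˢ packings 𝓑).InjOn fun p => p.1 ∪ p.2 := by
  rintro ⟨T, U⟩ ⟨hT, hU⟩ ⟨T', U'⟩ ⟨hT', hU'⟩ heq
  have disjoint_members {V W : Finset α} (hV : V ∈ packings 𝓐) (hW : W ∈ packings 𝓑) :
      Disjoint V W := Finset.disjoint_coe.1 (h.mono hV.1 hW.1)
  have union_eq : T ⊔ U = T' ⊔ U' := heq
  have left_eq : T = T' := le_antisymm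
    ((disjoint_members hT hU').left_le_of_le_sup_right (le_sup_left.trans union_eq.le))
    ((disjoint_members hT' hU).left_le_of_le_sup_right (le_sup_left.trans union_eq.ge))
  have right_eq : U = U' := le_antisymm
    ((disjoint_members hT' hU).symm.left_le_of_le_sup_left (le_sup_right.trans union_eq.le))
    ((disjoint_members hT hU').symm.left_le_of_le_sup_left (le_sup_right.trans union_eq.ge))
  exact Prod.ext left_eq right_eq

theorem ncard_packings_union {𝓐 𝓑 : Set α} (h𝓐𝓑 : Disjoint 𝓐 𝓑)
    (h : ∀ a ∈ 𝓐, ∀ b ∈ 𝓑, Disjoint a b) :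
    (packings (𝓐 ∪ 𝓑)).ncard = (packings 𝓐).ncard * (packings 𝓑).ncard := by
  classical
  rw [packings_union h, (injOn_union_packings h𝓐𝓑).ncard_image, Set.ncard_prod]

theorem packings_image [DecidableEq β] {f : α → β} (hf : f.Injective)
    (h : ∀ a b, Disjoint (f a) (f b) ↔ Disjoint a b) (𝓑 : Set α) :
    packings (f '' 𝓑) = Finset.image f '' packings 𝓑 := by
  have pairwiseDisjoint_image (T : Finset α) :
      (T.image f : Set β).PairwiseDisjoint id ↔ (T : Set α).PairwiseDisjoint id := by
    rw [Finset.coe_image, hf.injOn.pairwiseDisjoint_image]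
    simp only [Set.PairwiseDisjoint, Set.Pairwise, Function.onFun, Function.comp_apply, id, h]
  ext S
  constructor
  · rintro ⟨hS, hdisj⟩
    obtain ⟨T, hT, rfl⟩ := Finset.subset_set_image_iff.1 hS
    exact ⟨T, ⟨hT, (pairwiseDisjoint_image T).1 hdisj⟩, rfl⟩
  · rintro ⟨T, ⟨hT, hdisj⟩, rfl⟩
    exact ⟨Finset.subset_set_image_iff.2 ⟨T, hT, rfl⟩, (pairwiseDisjoint_image T).2 hdisj⟩

theorem ncard_packings_image {f : α → β} (hf : f.Injective)
    (h : ∀ a b, Disjoint (f a) (f b) ↔ Disjoint a b) (𝓑 : Set α) :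
    (packings (f '' 𝓑)).ncard = (packings 𝓑).ncard := by
  classical
  rw [packings_image hf h, Set.ncard_image_of_injective _ (Finset.image_injective hf)]

end Packings

section AlignedBlocks

variable {m i c : ℕ} {A B : Finset ℕ}

/-- The family of all aligned blocks contained in `{0, …, 2^m - 1}`. -/
def alignedBlocks (m : ℕ) : Set (Finset ℕ) :=
  {A | ∃ i c, i ≤ m ∧ c < 2 ^ (m - i) ∧ A = alignedBlock i c}

/-- Translation of a set of bins by `2^m`, carrying the left half of `{0, …, 2^(m+1) - 1}` onto
its right half. -/
def shiftRight (m : ℕ) : Finset ℕ → Finset ℕ := Finset.map (addRightEmbedding (2 ^ m))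

theorem shiftRight_injective (m : ℕ) : (shiftRight m).Injective :=
  Finset.map_injective _

theorem disjoint_shiftRight_shiftRight_iff :
    Disjoint (shiftRight m A) (shiftRight m B) ↔ Disjoint A B :=
  Finset.disjoint_map _

theorem le_of_mem_shiftRight {x : ℕ} (hx : x ∈ shiftRight m A) : 2 ^ m ≤ x := by
  obtain ⟨y, -, rfl⟩ := Finset.mem_map.1 hx
  exact Nat.le_add_left _ _

theorem disjoint_shiftRight_of_subset_range (hA : A ⊆ Finset.range (2 ^ m)) (B : Finset ℕ) :
    Disjoint A (shiftRight m B) :=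
  Finset.disjoint_left.2 fun _ hxA hxB =>
    (Finset.mem_range.1 (hA hxA)).not_ge (le_of_mem_shiftRight hxB)

theorem shiftRight_alignedBlock (hi : i ≤ m) :
    shiftRight m (alignedBlock i c) = alignedBlock i (c + 2 ^ (m - i)) := by
  have hpow : 2 ^ m = 2 ^ (m - i) * 2 ^ i := (pow_sub_mul_pow 2 hi).symm
  simp only [shiftRight, alignedBlock, Finset.map_add_right_Ico, hpow]
  congr 1 <;> ring

theorem alignedBlock_zero_right (m : ℕ) : alignedBlock m 0 = Finset.range (2 ^ m) := by
  rw [alignedBlock, zero_mul, zero_add, one_mul, Finset.range_eq_Ico]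

theorem alignedBlock_nonempty (i c : ℕ) : (alignedBlock i c).Nonempty := by
  rw [alignedBlock, Finset.nonempty_Ico]
  exact Nat.mul_lt_mul_of_pos_right c.lt_succ_self (Nat.two_pow_pos i)

theorem nonempty_of_mem_alignedBlocks (hA : A ∈ alignedBlocks m) : A.Nonempty := by
  obtain ⟨i, c, -, -, rfl⟩ := hA
  exact alignedBlock_nonempty i c

theorem subset_range_of_mem_alignedBlocks (hA : A ∈ alignedBlocks m) :
    A ⊆ Finset.range (2 ^ m) := by
  obtain ⟨i, c, hi, hc, rfl⟩ := hA
  intro x hx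
  rw [Finset.mem_range]
  calc x < (c + 1) * 2 ^ i := (Finset.mem_Ico.1 hx).2
    _ ≤ 2 ^ (m - i) * 2 ^ i := Nat.mul_le_mul_right _ hc
    _ = 2 ^ m := pow_sub_mul_pow 2 hi

theorem not_disjoint_range_of_mem_alignedBlocks (hA : A ∈ alignedBlocks m) :
    ¬Disjoint A (Finset.range (2 ^ m)) := fun hdisj =>
  (nonempty_of_mem_alignedBlocks hA).ne_empty
    (hdisj.eq_bot_of_le (subset_range_of_mem_alignedBlocks hA))

theorem alignedBlocks_zero : alignedBlocks 0 = {Finset.range 1} := by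
  ext A
  simp [alignedBlocks, alignedBlock_zero_right]

theorem alignedBlocks_succ (m : ℕ) :
    alignedBlocks (m + 1) =
      insert (Finset.range (2 ^ (m + 1)))
        (alignedBlocks m ∪ shiftRight m '' alignedBlocks m) := by
  have two_pow_succ_sub {i : ℕ} (hi : i ≤ m) : 2 ^ (m + 1 - i) = 2 ^ (m - i) + 2 ^ (m - i) := by
    rw [Nat.sub_add_comm hi, pow_succ, mul_two]
  ext A
  constructor
  · rintro ⟨i, c, hi, hc, rfl⟩
    obtain rfl | hi := hi.eq_or_lt
    · obtain rfl : c = 0 := by simpa using hc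
      exact .inl (alignedBlock_zero_right _)
    replace hi : i ≤ m := Nat.le_of_lt_succ hi
    rw [two_pow_succ_sub hi] at hc
    obtain hleft | hright := lt_or_ge c (2 ^ (m - i))
    · exact .inr (.inl ⟨i, c, hi, hleft, rfl⟩)
    · refine .inr (.inr ⟨_, ⟨i, c - 2 ^ (m - i), hi, by omega, rfl⟩, ?_⟩)
      rw [shiftRight_alignedBlock hi, Nat.sub_add_cancel hright]
  · rintro (rfl | ⟨i, c, hi, hc, rfl⟩ | ⟨_, ⟨i, c, hi, hc, rfl⟩, rfl⟩)
    · exact ⟨m + 1, 0, le_rfl, by simp, (alignedBlock_zero_right _).symm⟩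
    · exact ⟨i, c, by omega, by rw [two_pow_succ_sub hi]; omega, rfl⟩
    · exact ⟨i, _, by omega, by rw [two_pow_succ_sub hi]; omega, shiftRight_alignedBlock hi⟩

theorem finite_alignedBlocks (m : ℕ) : (alignedBlocks m).Finite :=
  (Finset.range (2 ^ m)).powerset.finite_toSet.subset fun _ hA =>
    Finset.mem_coe.2 (Finset.mem_powerset.2 (subset_range_of_mem_alignedBlocks hA))

theorem range_notMem_alignedBlocks_union (m : ℕ) :
    Finset.range (2 ^ (m + 1)) ∉ alignedBlocks m ∪ shiftRight m '' alignedBlocks m := by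
  rintro (hleft | ⟨B, -, hright⟩)
  · have hle := Finset.range_subset_range.1 (subset_range_of_mem_alignedBlocks hleft)
    exact hle.not_gt (Nat.pow_lt_pow_succ one_lt_two)
  · have zero_mem : 0 ∈ shiftRight m B := by simp [hright]
    exact (le_of_mem_shiftRight zero_mem).not_gt (Nat.two_pow_pos m)

theorem disjoint_alignedBlocks_image_shiftRight (m : ℕ) :
    Disjoint (alignedBlocks m) (shiftRight m '' alignedBlocks m) := by
  rw [Set.disjoint_left]
  rintro _ hA ⟨B, -, rfl⟩
  exact (nonempty_of_mem_alignedBlocks hA).ne_empty <| disjoint_self.1 <|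
    disjoint_shiftRight_of_subset_range (subset_range_of_mem_alignedBlocks hA) B

end AlignedBlocks

theorem ncard_packings_alignedBlocks_zero : (packings (alignedBlocks 0)).ncard = 2 := by
  rw [alignedBlocks_zero, ← insert_empty_eq,
    ncard_packings_insert Set.finite_empty (Set.notMem_empty _) (by simp), packings_empty,
    Set.ncard_singleton]

theorem ncard_packings_alignedBlocks_succ (m : ℕ) :
    (packings (alignedBlocks (m + 1))).ncard = (packings (alignedBlocks m)).ncard ^ 2 + 1 := by
  have halves_finite : (alignedBlocks m ∪ shiftRight m '' alignedBlocks m).Finite :=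
    (finite_alignedBlocks m).union ((finite_alignedBlocks m).image _)
  have full_meets_halves :
      ∀ A ∈ alignedBlocks m ∪ shiftRight m '' alignedBlocks m,
        ¬Disjoint A (Finset.range (2 ^ (m + 1))) := fun A hA =>
    not_disjoint_range_of_mem_alignedBlocks (alignedBlocks_succ m ▸ .inr hA)
  have halves_disjoint :
      ∀ A ∈ alignedBlocks m, ∀ B ∈ shiftRight m '' alignedBlocks m, Disjoint A B :=
    fun _ hA => Set.forall_mem_image.2 fun B _ =>
      disjoint_shiftRight_of_subset_range (subset_range_of_mem_alignedBlocks hA) B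
  rw [alignedBlocks_succ,
    ncard_packings_insert halves_finite (range_notMem_alignedBlocks_union m) full_meets_halves,
    ncard_packings_union (disjoint_alignedBlocks_image_shiftRight m) halves_disjoint,
    ncard_packings_image (shiftRight_injective m) fun _ _ => disjoint_shiftRight_shiftRight_iff, sq]

theorem card_isState_eq_ncard_packings (m : ℕ) :
    Nat.card {S : Finset (Finset ℕ) // IsState m S} = (packings (alignedBlocks m)).ncard :=
  rfl

/-- Proposition 8 (counting part): the number `f(m)` of states satisfies `f(0) = 2`
and `f(m) = f(m−1)² + 1` for `m ≥ 1`. -/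
theorem state_count_recurrence :
    Nat.card {S : Finset (Finset ℕ) // IsState 0 S} = 2 ∧
    ∀ m : ℕ, 1 ≤ m →
      Nat.card {S : Finset (Finset ℕ) // IsState m S}
        = (Nat.card {S : Finset (Finset ℕ) // IsState (m - 1) S}) ^ 2 + 1 := by
  simp only [card_isState_eq_ncard_packings]
  refine ⟨ncard_packings_alignedBlocks_zero, fun m hm => ?_⟩
  obtain ⟨n, rfl⟩ := Nat.exists_eq_add_of_le' hm
  exact ncard_packings_alignedBlocks_succ n
end

section
/- (Proposition 9, growth bound.) Let g : ℕ → ℕ satisfy g(0) = 2 and 2·g(m) = g(m−1)² + g(m−1) + 2 for every m ≥ 1 (equivalently g(m) = (1/2)·g(m−1)² + (1/2)·g(m−1) + 1). Then g(m) ≥ 2^{2^{m−1}+1} for every m ≥ 1. -/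
/-!
Once `g` is nonnegative, the recurrence gives `g(m)² ≤ 2·g(m+1)`, so that `g/2` at least squares at
each step. Since `g(1)/2 ≥ 2`, it follows that `g(m+1)/2 ≥ 2^(2^m)`. Starting from `g(1)` matters:
`g(0)/2 = 1` would only give the trivial bound.
-/

section OrderedSemiring

variable {R : Type*} [CommSemiring R] [LinearOrder R] [IsStrictOrderedRing R]

theorem mul_pow_pow_le_of_pow_succ_le_mul {u : ℕ → R} {b c : R} {k : ℕ} (hb : 0 ≤ b) (hc : 0 < c)
    (h_zero : c * b ≤ u 0) (h_succ : ∀ n, u n ^ (k + 1) ≤ c ^ k * u (n + 1)) (n : ℕ) :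
    c * b ^ (k + 1) ^ n ≤ u n := by
  induction n with
  | zero => simpa using h_zero
  | succ n ih =>
    refine le_of_mul_le_mul_left ?_ (pow_pos hc k)
    calc c ^ k * (c * b ^ (k + 1) ^ (n + 1))
        = (c * b ^ (k + 1) ^ n) ^ (k + 1) := by ring
      _ ≤ u n ^ (k + 1) := by gcongr
      _ ≤ c ^ k * u (n + 1) := h_succ n

theorem four_le_of_two_le_of_sq_add_self_add_two_le {x y : R} (hx : 2 ≤ x)
    (hxy : x ^ 2 + x + 2 ≤ 2 * y) : 4 ≤ y := by
  refine le_of_mul_le_mul_left ?_ (zero_lt_two (α := R))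
  calc (2 : R) * 4 = 2 ^ 2 + 2 + 2 := by norm_num
    _ ≤ x ^ 2 + x + 2 := by gcongr
    _ ≤ 2 * y := hxy

theorem two_le_of_sq_add_self_add_two_le {g : ℕ → R} (h_zero : 2 ≤ g 0)
    (h_succ : ∀ n, g n ^ 2 + g n + 2 ≤ 2 * g (n + 1)) (n : ℕ) : 2 ≤ g n := by
  induction n with
  | zero => exact h_zero
  | succ n ih =>
    have two_le_four : (2 : R) ≤ 4 := by norm_num
    exact two_le_four.trans (four_le_of_two_le_of_sq_add_self_add_two_le ih (h_succ n))

theorem super_state_count_growth_general {g : ℕ → R} (h_zero : 2 ≤ g 0)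
    (h_succ : ∀ n, g n ^ 2 + g n + 2 ≤ 2 * g (n + 1)) (n : ℕ) :
    2 ^ (2 ^ n + 1) ≤ g (n + 1) := by
  have two_mul_two_le : 2 * 2 ≤ g 1 := by
    simpa only [two_mul, two_add_two_eq_four] using
      four_le_of_two_le_of_sq_add_self_add_two_le h_zero (h_succ 0)
  have sq_le_two_mul (m : ℕ) : g m ^ 2 ≤ 2 * g (m + 1) := by
    have g_nonneg : 0 ≤ g m :=
      zero_le_two.trans (two_le_of_sq_add_self_add_two_le h_zero h_succ m)
    calc g m ^ 2 ≤ g m ^ 2 + (g m + 2) := le_add_of_nonneg_right (by positivity)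
      _ = g m ^ 2 + g m + 2 := (add_assoc ..).symm
      _ ≤ 2 * g (m + 1) := h_succ m
  rw [pow_succ']
  exact mul_pow_pow_le_of_pow_succ_le_mul (u := fun m ↦ g (m + 1)) (k := 1)
    zero_le_two zero_lt_two two_mul_two_le (fun m ↦ by simpa using sq_le_two_mul (m + 1)) n

end OrderedSemiring

/-- Proposition 9 (growth bound): if `g(0) = 2` and `2·g(m) = g(m−1)² + g(m−1) + 2`
for `m ≥ 1`, then `g(m) ≥ 2^{2^{m−1}+1}` for every `m ≥ 1`. -/
theorem super_state_count_growth (g : ℕ → ℕ) (h0 : g 0 = 2)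
    (hrec : ∀ m, 1 ≤ m → 2 * g m = g (m - 1) ^ 2 + g (m - 1) + 2) :
    ∀ m, 1 ≤ m → 2 ^ (2 ^ (m - 1) + 1) ≤ g m := by
  rintro (_ | n) hm
  · contradiction
  · exact super_state_count_growth_general h0.ge (fun k ↦ (hrec (k + 1) k.succ_pos).ge) n
end

section
/- (Corollary 10: full loading is possible for composite-M IFDMA.) Let p_0, p_1, …, p_{T−1} be integers each at least 2, let M = p_0·p_1·⋯·p_{T−1}, and for 0 ≤ s ≤ T let P_s = p_0·p_1·⋯·p_{s−1} (with P_0 = 1 and P_T = M). Suppose N_1, …, N_K are request sizes, each equal to P_{s_k} for some s_k ∈ {0,1,…,T}, with ∑_{k=1}^K N_k ≤ M. Then there exist pairwise disjoint sets S_1, …, S_K ⊆ {0,1,…,M−1} such that for each k, S_k = {d_k + i·(M/N_k) : i = 0,1,…,N_k−1} for some offset d_k with 0 ≤ d_k < M/N_k. -/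
/-!
Requests are served greedily in decreasing order of size. An evenly spaced set (a comb) of size `n`
consists of the subcarriers in one residue class modulo `M / n`. If `m ∣ n ∣ M`, then
`M / n ∣ M / m`, so a comb of size `m` is either contained in or disjoint from any comb of size `n`.
While the served sizes total less than `M`, some subcarrier `x` is still free; the comb through `x`
of the next size is contained in no served comb, hence disjoint from them all.
-/

/-- The evenly spaced set `{d + i·(M/n) : i = 0,…,n−1}` of `n` out of `M` subcarriers. It is meant
for `n ∣ M` and `d < M / n`; the division truncates when `n ∤ M`. -/
def subcarriers (M n d : ℕ) : Finset ℕ :=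
  (Finset.range n).image fun i => d + i * (M / n)

section Subcarriers

variable {M m n d e x : ℕ}

theorem mem_subcarriers (hn : n ∣ M) (hd : d < M / n) :
    x ∈ subcarriers M n d ↔ x < M ∧ x % (M / n) = d := by
  obtain ⟨q, rfl⟩ := hn
  have hn0 : 0 < n := Nat.pos_of_ne_zero fun h => by simp [h] at hd
  rw [Nat.mul_div_cancel_left q hn0] at hd
  simp only [subcarriers, Finset.mem_image, Finset.mem_range, Nat.mul_div_cancel_left q hn0]
  constructor
  · rintro ⟨i, hi, rfl⟩
    refine ⟨?_, by rw [Nat.add_mul_mod_self_right, Nat.mod_eq_of_lt hd]⟩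
    calc d + i * q < (i + 1) * q := by linarith
      _ ≤ n * q := Nat.mul_le_mul_right q hi
  · rintro ⟨hx, rfl⟩
    exact ⟨x / q, Nat.div_lt_of_lt_mul (mul_comm n q ▸ hx), Nat.mod_add_div' x q⟩

theorem subcarriers_subset_range (hn : n ∣ M) (hd : d < M / n) :
    subcarriers M n d ⊆ Finset.range M := fun _ hx =>
  Finset.mem_range.2 ((mem_subcarriers hn hd).1 hx).1

theorem card_subcarriers_le (M n d : ℕ) : (subcarriers M n d).card ≤ n :=
  Finset.card_image_le.trans_eq (Finset.card_range n)

theorem subcarriers_subset_or_disjoint (hmn : m ∣ n) (hn : n ∣ M) (he : e < M / m)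
    (hd : d < M / n) :
    subcarriers M m e ⊆ subcarriers M n d ∨ Disjoint (subcarriers M m e) (subcarriers M n d) := by
  have hmod : ∀ x ∈ subcarriers M m e, x % (M / n) = e % (M / n) := fun x hx => by
    rw [← ((mem_subcarriers (hmn.trans hn) he).1 hx).2,
      Nat.mod_mod_of_dvd x (Nat.div_dvd_div_left hn hmn)]
  by_cases hed : e % (M / n) = d
  · refine .inl fun x hx => (mem_subcarriers hn hd).2 ⟨?_, (hmod x hx).trans hed⟩
    exact ((mem_subcarriers (hmn.trans hn) he).1 hx).1
  · exact .inr (Finset.disjoint_left.2 fun x hx hx' =>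
      hed ((hmod x hx).symm.trans ((mem_subcarriers hn hd).1 hx').2))

end Subcarriers

section Allocation

variable {ι : Type*} {M : ℕ} {N : ι → ℕ} {A : Finset ι}

theorem exists_lt_forall_notMem_subcarriers (d : ι → ℕ) (hsum : ∑ k ∈ A, N k < M) :
    ∃ x < M, ∀ k ∈ A, x ∉ subcarriers M (N k) (d k) := by
  have hcard : (A.biUnion fun k => subcarriers M (N k) (d k)).card < (Finset.range M).card :=
    calc
      _ ≤ ∑ k ∈ A, (subcarriers M (N k) (d k)).card := Finset.card_biUnion_le
      _ ≤ ∑ k ∈ A, N k := Finset.sum_le_sum fun k _ => card_subcarriers_le M (N k) (d k)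
      _ < (Finset.range M).card := by rwa [Finset.card_range]
  obtain ⟨x, hxM, hx⟩ := Finset.exists_mem_notMem_of_card_lt_card hcard
  exact ⟨x, Finset.mem_range.1 hxM, fun k hk hxk => hx (Finset.mem_biUnion.2 ⟨k, hk, hxk⟩)⟩

theorem exists_subcarriers_disjoint {n : ℕ} {d : ι → ℕ} (hnN : ∀ k ∈ A, n ∣ N k) (hnM : n ∣ M)
    (hNM : ∀ k ∈ A, N k ∣ M) (hd : ∀ k ∈ A, d k < M / N k) (hsum : ∑ k ∈ A, N k < M) :
    ∃ e < M / n, ∀ k ∈ A, Disjoint (subcarriers M n e) (subcarriers M (N k) (d k)) := by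
  obtain ⟨x, hxM, hfree⟩ := exists_lt_forall_notMem_subcarriers d hsum
  have he : x % (M / n) < M / n :=
    Nat.mod_lt _ (Nat.pos_of_dvd_of_pos (Nat.div_dvd_of_dvd hnM) (Nat.zero_lt_of_lt hsum))
  refine ⟨x % (M / n), he, fun k hk => ?_⟩
  have hx : x ∈ subcarriers M n (x % (M / n)) := (mem_subcarriers hnM he).2 ⟨hxM, rfl⟩
  exact (subcarriers_subset_or_disjoint (hnN k hk) (hNM k hk) he (hd k hk)).resolve_left
    fun hsub => hfree k hk (hsub hx)

theorem composite_ifdma_full_loading_general (hM : 0 < M) (hdvd : ∀ k ∈ A, N k ∣ M)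
    (hchain : ∀ k ∈ A, ∀ l ∈ A, N k ∣ N l ∨ N l ∣ N k) (hsum : ∑ k ∈ A, N k ≤ M) :
    ∃ d : ι → ℕ, (∀ k ∈ A, d k < M / N k) ∧
      ∀ k ∈ A, ∀ l ∈ A, k ≠ l →
        Disjoint (subcarriers M (N k) (d k)) (subcarriers M (N l) (d l)) := by
  classical
  induction A using Finset.induction_on_min_value N with
  | empty => exact ⟨fun _ => 0, by simp, by simp⟩
  | insert a s ha hmin ih =>
    simp only [Finset.forall_mem_insert] at hdvd hchain
    obtain ⟨haM, hsM⟩ := hdvd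
    have ha0 : 0 < N a := Nat.pos_of_dvd_of_pos haM hM
    have hdvd_of_min : ∀ k ∈ s, N a ∣ N k := fun k hk =>
      (hchain.1.2 k hk).elim id fun hka =>
        (le_antisymm (hmin k hk) (Nat.le_of_dvd ha0 hka)).dvd
    have hsum_lt : ∑ k ∈ s, N k < M := by
      rw [Finset.sum_insert ha] at hsum
      lia
    obtain ⟨d, hd, hdisj⟩ := ih hsM (fun k hk => (hchain.2 k hk).2) hsum_lt.le
    obtain ⟨e, he, hedisj⟩ := exists_subcarriers_disjoint hdvd_of_min haM hsM hd hsum_lt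
    have hupdate : ∀ k ∈ s, Function.update d a e k = d k := fun k hk =>
      Function.update_of_ne (ne_of_mem_of_not_mem hk ha) e d
    refine ⟨Function.update d a e, ?_, ?_⟩
    · simpa +contextual [hupdate, he] using hd
    · simp +contextual only [Finset.forall_mem_insert, Function.update_self, hupdate]
      exact ⟨⟨fun h => absurd rfl h, fun k hk _ => hedisj k hk⟩,
        fun k hk => ⟨fun _ => (hedisj k hk).symm, hdisj k hk⟩⟩

end Allocation

theorem prod_range_dvd_prod_range {α : Type*} [CommMonoid α] (f : ℕ → α) {s t : ℕ} (h : s ≤ t) :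
    ∏ i ∈ Finset.range s, f i ∣ ∏ i ∈ Finset.range t, f i :=
  Finset.prod_dvd_prod_of_subset _ _ f (Finset.range_subset_range.2 h)

/-- Corollary 10 (full loading is possible for composite-`M` IFDMA): with
`M = p_0·⋯·p_{T−1}` and request sizes in the chain `{P_s = p_0·⋯·p_{s−1}}` totaling at
most `M`, the requests can be granted pairwise disjoint evenly-spaced subcarrier sets
`{d_k + i·(M/N_k) : i = 0,…,N_k−1}` with `0 ≤ d_k < M/N_k`. -/
theorem composite_ifdma_full_loading (T : ℕ) (p : ℕ → ℕ) (hp : ∀ t < T, 2 ≤ p t)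
    (K : ℕ) (N : ℕ → ℕ)
    (hN : ∀ k < K, ∃ s ≤ T, N k = ∏ t ∈ Finset.range s, p t)
    (hsum : ∑ k ∈ Finset.range K, N k ≤ ∏ t ∈ Finset.range T, p t) :
    ∃ S : ℕ → Finset ℕ,
      (∀ k < K, ∀ l < K, k ≠ l → Disjoint (S k) (S l)) ∧
      (∀ k < K, S k ⊆ Finset.range (∏ t ∈ Finset.range T, p t)) ∧
      (∀ k < K, ∃ d < (∏ t ∈ Finset.range T, p t) / N k,
        S k = Finset.image
          (fun i => d + i * ((∏ t ∈ Finset.range T, p t) / N k))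
          (Finset.range (N k))) := by
  have hM : 0 < ∏ t ∈ Finset.range T, p t :=
    Finset.prod_pos fun t ht => two_pos.trans_le (hp t (Finset.mem_range.1 ht))
  have hdvd : ∀ k < K, N k ∣ ∏ t ∈ Finset.range T, p t := fun k hk => by
    obtain ⟨s, hs, hNk⟩ := hN k hk
    exact hNk ▸ prod_range_dvd_prod_range p hs
  have hchain : ∀ k < K, ∀ l < K, N k ∣ N l ∨ N l ∣ N k := fun k hk l hl => by
    obtain ⟨s, -, hNk⟩ := hN k hk
    obtain ⟨t, -, hNl⟩ := hN l hl
    rw [hNk, hNl]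
    exact (le_total s t).imp (prod_range_dvd_prod_range p) (prod_range_dvd_prod_range p)
  simp only [← Finset.mem_range (n := K)] at hdvd hchain ⊢
  obtain ⟨d, hd, hdisj⟩ := composite_ifdma_full_loading_general hM hdvd hchain hsum
  exact ⟨fun k => subcarriers _ (N k) (d k), hdisj,
    fun k hk => subcarriers_subset_range (hdvd k hk) (hd k hk), fun k hk => ⟨d k, hd k hk, rfl⟩⟩
end

section
/- (Digit reversal for composite M.) Let p_0, p_1, …, p_{T−1} be integers each at least 2, let M = p_0·p_1·⋯·p_{T−1}, and for 0 ≤ s ≤ T let P_s = p_0·p_1·⋯·p_{s−1} (so P_0 = 1, P_T = M). Define the digit-reversal map ρ on {0,1,…,M−1} by ρ(k) = ∑_{t=0}^{T−1} d_t·(M/P_{t+1}), where k = ∑_{t=0}^{T−1} d_t·P_t is the unique mixed-radix expansion of k with 0 ≤ d_t < p_t for each t. Then: (i) ρ is a bijection of {0,1,…,M−1} onto itself; (ii) for every s ∈ {0,1,…,T} and every j with 0 ≤ j < M/P_s, the image under ρ of the contiguous block {j·P_s, j·P_s+1, …, j·P_s + P_s − 1} equals {d + i·(M/P_s) : i = 0,1,…,P_s−1}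 for some offset d with 0 ≤ d < M/P_s. -/
/-- The partial product `P_s = p_0·p_1·⋯·p_{s−1}` (so `P_0 = 1`). -/
def partialProd (p : ℕ → ℕ) (s : ℕ) : ℕ := ∏ t ∈ Finset.range s, p t

/-- The digit-reversal map for mixed radix `p_0, …, p_{T−1}`: `k = ∑_t d_t·P_t`
(with digits `0 ≤ d_t < p_t`) is sent to `∑_t d_t·(M/P_{t+1})`, where `M = P_T`. -/
def digitRev (p : ℕ → ℕ) (T k : ℕ) : ℕ :=
  ∑ t ∈ Finset.range T, (k / partialProd p t % p t) * (partialProd p T / partialProd p (t + 1))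

/-!
Cutting the radix sequence at `s` splits the digits of `k` into those of `k % P_s` and those of
`k / P_s`. Reversal exchanges the two groups, so with `Q = M / P_s`
`ρ_p(k) = ρ_q(k / P_s) + ρ_s(k) * Q`, where `q` is `p` shifted by `s`, `ρ_s` reverses only the
first `s` digits, and `ρ_q(k / P_s) < Q`. Cutting off one digit at a time shows that `ρ(k)`
determines and is determined by `k` modulo `M`. On a block of length `P_s` aligned to a multiple
of `P_s`, the quotient `k / P_s` is constant while `ρ_s(k)` runs through all of
`{0, …, P_s - 1}`.
-/

theorem modEq_mul_iff_modEq_and_div_modEq (a b k l : ℕ) :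
    k ≡ l [MOD a * b] ↔ k ≡ l [MOD a] ∧ k / a ≡ l / a [MOD b] := by
  simp only [Nat.ModEq]
  rw [Nat.ext_div_mod_iff a (k % (a * b)), Nat.mod_mul_right_div_self,
    Nat.mod_mul_right_div_self, Nat.mod_mul_right_mod, Nat.mod_mul_right_mod, and_comm]

section DigitRev

variable {p : ℕ → ℕ} {T s : ℕ}

theorem partialProd_add (p : ℕ → ℕ) (s n : ℕ) :
    partialProd p (s + n) = partialProd p s * partialProd (fun t => p (s + t)) n :=
  Finset.prod_range_add p s n

theorem partialProd_succ (p : ℕ → ℕ) (T : ℕ) :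
    partialProd p (T + 1) = partialProd p T * p T :=
  Finset.prod_range_succ p T

theorem partialProd_dvd_partialProd (p : ℕ → ℕ) (h : s ≤ T) :
    partialProd p s ∣ partialProd p T :=
  Finset.prod_dvd_prod_of_subset _ _ _ (Finset.range_mono h)

theorem digitRev_add (hs : 0 < partialProd p s) (n k : ℕ) :
    digitRev p (s + n) k =
      digitRev (fun t => p (s + t)) n (k / partialProd p s) +
        digitRev p s k * partialProd (fun t => p (s + t)) n := by
  have low_digits : ∀ t ∈ Finset.range s,
      k / partialProd p t % p t * (partialProd p (s + n) / partialProd p (t + 1)) =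
        k / partialProd p t % p t * (partialProd p s / partialProd p (t + 1)) *
          partialProd (fun t => p (s + t)) n := by
    intro t ht
    have hdvd := partialProd_dvd_partialProd p (Nat.succ_le_of_lt (Finset.mem_range.1 ht))
    rw [partialProd_add, ← Nat.div_mul_right_comm hdvd, mul_assoc]
  have high_digits : ∀ t ∈ Finset.range n,
      k / partialProd p (s + t) % p (s + t) *
          (partialProd p (s + n) / partialProd p (s + t + 1)) =
        k / partialProd p s / partialProd (fun t => p (s + t)) t % p (s + t) *
          (partialProd (fun t => p (s + t)) n / partialProd (fun t => p (s + t)) (t + 1)) := by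
    intro t _
    rw [add_assoc s t 1, partialProd_add p s t, partialProd_add p s n,
      partialProd_add p s (t + 1), Nat.mul_div_mul_left _ _ hs, Nat.div_div_eq_div_mul]
  simp only [digitRev]
  rw [Finset.sum_range_add, Finset.sum_congr rfl low_digits, Finset.sum_congr rfl high_digits,
    ← Finset.sum_mul, add_comm]

theorem digitRev_succ (hT : 0 < partialProd p (T + 1)) (k : ℕ) :
    digitRev p (T + 1) k = k / partialProd p T % p T + digitRev p T k * p T := by
  rw [partialProd_succ, CanonicallyOrderedAdd.mul_pos] at hT
  rw [digitRev_add hT.1]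
  simp [digitRev, partialProd, Nat.div_self hT.2]

theorem digitRev_lt (hT : 0 < partialProd p T) (k : ℕ) : digitRev p T k < partialProd p T := by
  induction T with
  | zero => simp [digitRev, partialProd]
  | succ T ih =>
    rw [digitRev_succ hT, partialProd_succ]
    rw [partialProd_succ, CanonicallyOrderedAdd.mul_pos] at hT
    calc k / partialProd p T % p T + digitRev p T k * p T
        < p T + digitRev p T k * p T := by gcongr; exact Nat.mod_lt _ hT.2
      _ = (digitRev p T k + 1) * p T := by ring
      _ ≤ partialProd p T * p T := by gcongr; exact ih hT.1

theorem digitRev_eq_iff_modEq (hT : 0 < partialProd p T) {k l : ℕ} :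
    digitRev p T k = digitRev p T l ↔ k ≡ l [MOD partialProd p T] := by
  induction T with
  | zero => simp [digitRev, partialProd, Nat.modEq_one]
  | succ T ih =>
    have ⟨hP, hpT⟩ : 0 < partialProd p T ∧ 0 < p T := by
      rwa [partialProd_succ, CanonicallyOrderedAdd.mul_pos] at hT
    have div_eq (m : ℕ) : digitRev p (T + 1) m / p T = digitRev p T m := by
      rw [digitRev_succ hT, Nat.add_mul_div_right _ _ hpT, Nat.mod_div_self, zero_add]
    have mod_eq (m : ℕ) : digitRev p (T + 1) m % p T = m / partialProd p T % p T := by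
      rw [digitRev_succ hT, Nat.add_mul_mod_self_right, Nat.mod_mod]
    calc digitRev p (T + 1) k = digitRev p (T + 1) l
        ↔ k ≡ l [MOD partialProd p T] ∧
            k / partialProd p T ≡ l / partialProd p T [MOD p T] := by
          rw [Nat.ext_div_mod_iff (p T), div_eq, div_eq, mod_eq, mod_eq, ih hP, Nat.ModEq,
            Nat.ModEq]
      _ ↔ k ≡ l [MOD partialProd p (T + 1)] := by
          rw [partialProd_succ, modEq_mul_iff_modEq_and_div_modEq]

theorem bijOn_digitRev (hT : 0 < partialProd p T) :
    Set.BijOn (digitRev p T) (Set.Iio (partialProd p T)) (Set.Iio (partialProd p T)) := by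
  have mapsTo : Set.MapsTo (digitRev p T) (Set.Iio (partialProd p T))
      (Set.Iio (partialProd p T)) := fun k _ => digitRev_lt hT k
  rw [← (Set.finite_Iio _).injOn_iff_bijOn_of_mapsTo mapsTo]
  exact fun k hk l hl h => ((digitRev_eq_iff_modEq hT).1 h).eq_of_lt_of_lt hk hl

theorem image_digitRev_Ico (hT : 0 < partialProd p T) (a : ℕ) :
    (Finset.Ico a (a + partialProd p T)).image (digitRev p T) =
      Finset.range (partialProd p T) := by
  have periodic : digitRev p T ∘ (· % partialProd p T) = digitRev p T :=
    funext fun k => (digitRev_eq_iff_modEq hT).2 (Nat.mod_modEq k _)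
  rw [← periodic, ← Finset.image_image, Nat.image_Ico_mod, ← Finset.coe_inj,
    Finset.coe_image, Finset.coe_range, (bijOn_digitRev hT).image_eq]

theorem image_digitRev_add_Ico (hs : 0 < partialProd p s) (n j : ℕ) :
    (Finset.Ico (j * partialProd p s) (j * partialProd p s + partialProd p s)).image
        (digitRev p (s + n)) =
      (Finset.range (partialProd p s)).image fun i =>
        digitRev (fun t => p (s + t)) n j + i * partialProd (fun t => p (s + t)) n := by
  rw [← image_digitRev_Ico hs (j * partialProd p s), Finset.image_image]
  refine Finset.image_congr fun k hk => ?_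
  rw [Finset.coe_Ico, Set.mem_Ico, ← Nat.succ_mul] at hk
  rw [digitRev_add hs, Nat.div_eq_of_lt_le hk.1 hk.2, Function.comp_apply]

end DigitRev

/-- Digit reversal for composite `M = p_0·⋯·p_{T−1}`: (i) the digit-reversal map is a
bijection of `{0,…,M−1}` onto itself; (ii) it maps every contiguous block of size
`P_s` starting at a multiple of `P_s` onto an evenly-spaced set
`{d + i·(M/P_s) : i = 0,…,P_s−1}` for some `0 ≤ d < M/P_s`. -/
theorem digitRev_bijective_and_block_to_evenly_spaced
    (T : ℕ) (p : ℕ → ℕ) (hp : ∀ t < T, 2 ≤ p t) :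
    Set.BijOn (digitRev p T) (Set.Iio (partialProd p T)) (Set.Iio (partialProd p T)) ∧
    ∀ s ≤ T, ∀ j < partialProd p T / partialProd p s,
      ∃ d < partialProd p T / partialProd p s,
        Finset.image (digitRev p T)
            (Finset.Ico (j * partialProd p s) (j * partialProd p s + partialProd p s))
          = Finset.image (fun i => d + i * (partialProd p T / partialProd p s))
              (Finset.range (partialProd p s)) := by
  have hT : 0 < partialProd p T :=
    Finset.prod_pos fun t ht => two_pos.trans_le (hp t (Finset.mem_range.1 ht))
  refine ⟨bijOn_digitRev hT, fun s hs j _ => ?_⟩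
  obtain ⟨n, rfl⟩ := Nat.exists_eq_add_of_le hs
  obtain ⟨hP, hQ⟩ : 0 < partialProd p s ∧ 0 < partialProd (fun t => p (s + t)) n := by
    rwa [partialProd_add, CanonicallyOrderedAdd.mul_pos] at hT
  rw [partialProd_add, Nat.mul_div_cancel_left _ hP]
  exact ⟨digitRev (fun t => p (s + t)) n j, digitRev_lt hQ j, image_digitRev_add_Ico hP n j⟩
end
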